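/- arXiv:2601.10424 — 4 statements merged into one kernel-verified Lean document; each statement's English description precedes it below -/
import Mathlib

section
/- Let B_{ij} ∈ M₃(ℂ) (1 ≤ i,j ≤ 3) satisfy: (i) Σ_{i,j=1}^{3} ξ^i·conj(ξ^j)·B_{ij} is a positive definite matrix for every nonzero ξ = (ξ^1,ξ^2,ξ^3) ∈ ℂ³; (ii) Σ_{i=1}^{3} B_{ii} = 3·I; (iii) tr(B_{ij}) = 3·δ_{ij} for all i,j. Then Φ := Σ_{σ∈S₃} sgn(σ)·D(B_{1σ(1)}, B_{2σ(2)}, B_{3σ(3)}) > 0. -/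
open scoped BigOperators ComplexOrder

noncomputable section

/-- The mixed discriminant of `r` complex `r × r` matrices:
`D(A¹,…,Aʳ) = (1/r!) ∑_{σ ∈ S_r} det ((i,k) ↦ (A^{σ(i)})_{i,k})`. -/
def mixedDisc {r : ℕ} (A : Fin r → Matrix (Fin r) (Fin r) ℂ) : ℂ :=
  (1 / (Nat.factorial r : ℂ)) *
    ∑ σ : Equiv.Perm (Fin r), Matrix.det (Matrix.of fun i k => A (σ i) i k)

/-!
For `ξ ∈ ℂ³` put `T(ξ) = ∑ ξᵢ conj(ξⱼ) Bᵢⱼ`, and let `e₁, e₂, e₃` be the elementary symmetric functions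
of the eigenvalues of `T(ξ)`. Averaging over the unit sphere gives

  `Φ = E [e₁³ - 4 e₁ e₂ + 10 e₃]`.

The integrand is positive: `T(ξ)` is positive definite, so `e₁³ - 4 e₁ e₂ + 9 e₃ ≥ 0` by Schur's
inequality and `e₃ > 0`.

To see the formula, let `D` also denote the polarised determinant. With `∑ Bᵢᵢ = 3 I`,
`a = ∑ D(I, Bⱼₖ, Bₖⱼ)` and `g = ∑ D(Bᵢⱼ, Bⱼₖ, Bₖᵢ)`, the alternating sum is
`Φ = (27 - 9a + 2g) / 6`, while `E e₃ = (27 + 9a + 2g) / 60` and `E e₂ = (9 + a) / 4`; moreover `e₁ = 3`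
on the unit sphere, because `tr Bᵢⱼ = 3 δᵢⱼ`. Hence `E [27 - 12 e₂ + 10 e₃] = 10 E e₃ - 3a = Φ`.

The integrand is a homogeneous polynomial of degree three in `ξ` and in `conj ξ`, so the average is
replaced by a cubature formula with 31 Gaussian integer nodes and positive weights (`cubature`).
The positivity is `schur_pos`, and `phi_eq` rewrites `Φ` through the same trace contractions.
-/


/-! ### A cubature formula of degree three on the complex projective plane -/

/-- Index set of the 31 nodes: three coordinate vectors, four vectors for each pair of coordinates,
and sixteen vectors with all coordinates nonzero. -/
abbrev Node : Type := Fin 3 ⊕ (Fin 3 × Fin 4) ⊕ (Fin 4 × Fin 4)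

/-- The fourth roots of unity in `ℤ[i]`. -/
def phase : Fin 4 → GaussianInt := ![⟨1, 0⟩, ⟨0, 1⟩, ⟨-1, 0⟩, ⟨0, -1⟩]

/-- The nodes, as Gaussian integer vectors whose nonzero coordinates are fourth roots of unity.
Summing over these phases annihilates every monomial `ξ^α conj(ξ)^β` with `|α| = |β| = 3` and
`α ≠ β`, because the entries of `α - β` lie between `-3` and `3`. The moduli `(|ξᵢ|²)` run over the
vertices, edge midpoints and centroid of a simplex, up to scaling. -/
def node : Node → Fin 3 → GaussianInt
  | .inl k => fun i => if i = k then 1 else 0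
  | .inr (.inl (k, a)) => fun i => if i = k then 0 else if i = k + 1 then 1 else phase a
  | .inr (.inr (a, b)) => ![1, phase a, phase b]

/-- The weights, scaled so that the cubature formula is integral. They come from the
vertex, midpoint and centroid rule `3/60, 8/60, 27/60`, exact in degree three on a triangle; the
edge and centroid nodes are not normalised, which contributes factors `2⁻³` and `3⁻³`. -/
def weight : Node → ℕ
  | .inl _ => 48
  | .inr (.inl _) => 4
  | .inr (.inr _) => 1

lemma weight_pos (κ : Node) : 0 < weight κ := by
  rcases κ with k | k | k <;> simp [weight]

/-- The Kronecker delta with natural number values. -/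
def delta (i j : Fin 3) : ℕ := if i = j then 1 else 0

/-- The sixth order moments of the nodes are those of the invariant measure: up to the factor `16`,
the sum over all pairings of the unconjugated with the conjugated indices. -/
lemma moment_int (i j k l m n : Fin 3) :
    ∑ κ : Node, (weight κ : GaussianInt) *
      ((node κ i * star (node κ j)) * (node κ k * star (node κ l)) *
        (node κ m * star (node κ n))) =
    ((16 * (delta i j * delta k l * delta m n + delta i l * delta k j * delta m n
      + delta i j * delta k n * delta m l + delta i n * delta k l * delta m j
      + delta i l * delta k n * delta m j + delta i n * delta k j * delta m l) : ℕ) : GaussianInt) := by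
  revert i j k l m n
  decide +kernel

/-- The sesquilinear form `∑ i j, xᵢ conj(xⱼ) uᵢⱼ`. -/
def form (u : Matrix (Fin 3) (Fin 3) ℂ) (x : Fin 3 → ℂ) : ℂ :=
  ∑ i, ∑ j, (x i * (starRingEnd ℂ) (x j)) * u i j

/-- The nodes as complex vectors. -/
def pt (κ : Node) (i : Fin 3) : ℂ := (node κ i : ℂ)


lemma pt_ne_zero (κ : Node) : pt κ ≠ 0 := by
  have h : ∀ κ : Node, ∃ i, node κ i ≠ 0 := by decide +kernel
  obtain ⟨i, hi⟩ := h κ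
  exact fun h0 => hi (GaussianInt.toComplex_eq_zero.1 (congrFun h0 i))

lemma moment (i j k l m n : Fin 3) :
    ∑ κ : Node, (weight κ : ℂ) *
      ((pt κ i * (starRingEnd ℂ) (pt κ j)) * (pt κ k * (starRingEnd ℂ) (pt κ l)) *
        (pt κ m * (starRingEnd ℂ) (pt κ n))) =
    16 * (delta i j * delta k l * delta m n + delta i l * delta k j * delta m n
      + delta i j * delta k n * delta m l + delta i n * delta k l * delta m j
      + delta i l * delta k n * delta m j + delta i n * delta k j * delta m l) := by
  have h := congrArg GaussianInt.toComplex (moment_int i j k l m n)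
  rw [map_natCast] at h
  push_cast at h
  simpa only [pt, map_sum, map_mul, map_natCast, GaussianInt.toComplex_star] using h

lemma form_eq (u : Matrix (Fin 3) (Fin 3) ℂ) (x : Fin 3 → ℂ) :
    form u x = ∑ p : Fin 3 × Fin 3, (x p.1 * (starRingEnd ℂ) (x p.2)) * u p.1 p.2 := by
  rw [Fintype.sum_prod_type, form]

open Matrix in
/-- Averaging a product of three forms `u, v, w` gives the sum over `S₃` of the complete
contractions of `u ⊗ v ⊗ w`, that is (up to a constant) `tr (Sym³ projection ∘ u ⊗ v ⊗ w)`. -/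
lemma cubature (u v w : Matrix (Fin 3) (Fin 3) ℂ) :
    ∑ κ : Node, (weight κ : ℂ) * (form u (pt κ) * form v (pt κ) * form w (pt κ)) =
    16 * (trace u * trace v * trace w + trace (u * v) * trace w + trace (v * w) * trace u
      + trace (u * w) * trace v + trace (u * v * w) + trace (u * w * v)) := by
  have h1 : ∀ κ : Node, (weight κ : ℂ) * (form u (pt κ) * form v (pt κ) * form w (pt κ)) =
      ∑ p : Fin 3 × Fin 3, ∑ q : Fin 3 × Fin 3, ∑ r : Fin 3 × Fin 3, (weight κ : ℂ) *
      ((pt κ p.1 * (starRingEnd ℂ) (pt κ p.2)) * (pt κ q.1 * (starRingEnd ℂ) (pt κ q.2)) *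
        (pt κ r.1 * (starRingEnd ℂ) (pt κ r.2))) * (u p.1 p.2 * v q.1 q.2 * w r.1 r.2) := by
    intro κ
    rw [form_eq u, form_eq v, form_eq w]
    rw [mul_assoc, Finset.sum_mul_sum, Finset.sum_mul_sum, Finset.mul_sum]
    simp only [Finset.mul_sum]
    refine Finset.sum_congr rfl fun p _ => Finset.sum_congr rfl fun q _ =>
      Finset.sum_congr rfl fun r _ => ?_
    ring
  simp_rw [h1]
  have h2 : ∀ g : Node → Fin 3 × Fin 3 → Fin 3 × Fin 3 → Fin 3 × Fin 3 → ℂ,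
      ∑ κ, ∑ p, ∑ q, ∑ r, g κ p q r = ∑ p, ∑ q, ∑ r, ∑ κ, g κ p q r := by
    intro g
    rw [Finset.sum_comm]
    refine Finset.sum_congr rfl fun p _ => ?_
    rw [Finset.sum_comm]
    exact Finset.sum_congr rfl fun q _ => Finset.sum_comm
  rw [h2]
  simp_rw [← Finset.sum_mul, moment]
  simp only [Fintype.sum_prod_type, delta, Nat.cast_ite, Nat.cast_one, Nat.cast_zero, mul_add,
    add_mul, Finset.sum_add_distrib, mul_ite, ite_mul, mul_one, mul_zero, zero_mul, 
    Finset.sum_ite_eq, Finset.mem_univ, if_true]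
  simp [trace, Matrix.mul_apply, Fin.sum_univ_three]
  ring

/-! ### Schur's inequality -/

/-- Schur's inequality of degree three, in elementary symmetric polynomials. -/
lemma schur_real {a b c : ℝ} (ha : 0 ≤ a) (hb : 0 ≤ b) (hc : 0 ≤ c) :
    0 ≤ (a + b + c) ^ 3 - 4 * (a + b + c) * (a * b + a * c + b * c) + 9 * (a * b * c) := by
  have aux : ∀ x y z : ℝ, 0 ≤ z → z ≤ y → y ≤ x →
      0 ≤ (x + y + z) ^ 3 - 4 * (x + y + z) * (x * y + x * z + y * z) + 9 * (x * y * z) := by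
    intro x y z hz hzy hyx
    -- The expression is `(x - y)² (x + y - z) + z (x - z) (y - z)`.
    have h1 : 0 ≤ (x - y) ^ 2 * (x + y - z) := mul_nonneg (sq_nonneg _) (by linarith)
    have h2 : 0 ≤ z * ((x - z) * (y - z)) :=
      mul_nonneg hz (mul_nonneg (by linarith) (by linarith))
    linarith
  rcases le_total a b with h1 | h1 <;> rcases le_total b c with h2 | h2 <;>
    rcases le_total a c with h3 | h3
  · linarith [aux c b a ha h1 h2]
  · linarith [aux c b a ha h1 h2]
  · linarith [aux b c a ha h3 h2]
  · linarith [aux b a c hc h3 h1]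
  · linarith [aux c a b hb h1 h3]
  · linarith [aux a c b hb h2 h3]
  · linarith [aux a b c hc h2 h1]
  · linarith [aux a b c hc h2 h1]

/-- The cubic `e₁³ - 4 e₁ e₂ + 10 e₃` in the eigenvalues of a `3 × 3` matrix, written in terms of
its entries. -/
def schurFn (M : Matrix (Fin 3) (Fin 3) ℂ) : ℂ :=
  M.trace ^ 3 - 4 * M.trace * (M 0 0 * M 1 1 + M 0 0 * M 2 2 + M 1 1 * M 2 2
    - M 0 1 * M 1 0 - M 0 2 * M 2 0 - M 1 2 * M 2 1) + 10 * M.det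

lemma schur_pos {M : Matrix (Fin 3) (Fin 3) ℂ} (hM : M.PosDef) :
    0 < schurFn M := by
  have hH := hM.isHermitian
  have hp := hM.eigenvalues_pos
  have h1 := hH.trace_eq_sum_eigenvalues
  have h2 := hH.det_eq_prod_eigenvalues
  -- The value of the characteristic polynomial at `1` gives the second symmetric function.
  have h3 := congrArg (Polynomial.eval 1) hH.charpoly_eq
  rw [Matrix.eval_charpoly] at h3
  have ha := hp 0
  have hb := hp 1
  have hc := hp 2
  have h2' := h2
  rw [Matrix.det_fin_three] at h2'
  simp [Matrix.det_fin_three, Fin.prod_univ_three] at h3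
  simp only [Matrix.trace, Matrix.diag_apply, Fin.sum_univ_three, Fin.prod_univ_three] at h1 h2 h2'
  generalize hH.eigenvalues 0 = a at *
  generalize hH.eigenvalues 1 = b at *
  generalize hH.eigenvalues 2 = c at *
  have h4 : M 0 0 * M 1 1 + M 0 0 * M 2 2 + M 1 1 * M 2 2
      - M 0 1 * M 1 0 - M 0 2 * M 2 0 - M 1 2 * M 2 1 = (a * b + a * c + b * c : ℂ) := by
    simp at h1 h2'
    linear_combination h3 + h1 + h2'
  rw [schurFn, h4, h2, Matrix.trace, Fin.sum_univ_three]
  simp only [Matrix.diag_apply]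
  rw [h1]
  have key : 0 < (a + b + c) ^ 3 - 4 * (a + b + c) * (a * b + a * c + b * c)
      + 10 * (a * b * c) := by
    have habc : 0 < a * b * c := by positivity
    have h := schur_real ha.le hb.le hc.le
    linarith
  simpa using (show (0 : ℂ) < (((a + b + c) ^ 3 - 4 * (a + b + c) * (a * b + a * c + b * c)
      + 10 * (a * b * c) : ℝ) : ℂ) from by exact_mod_cast key)

/-! ### The alternating sum of mixed discriminants -/

lemma sum_perm_three (f : Equiv.Perm (Fin 3) → ℂ) :
    ∑ σ, f σ = f 1 + f (Equiv.swap 0 1) + f (Equiv.swap 0 2) + f (Equiv.swap 1 2)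
      + f (Equiv.swap 0 1 * Equiv.swap 1 2) + f (Equiv.swap 1 2 * Equiv.swap 0 1) := by
  rw [show (Finset.univ : Finset (Equiv.Perm (Fin 3))) = {1, Equiv.swap 0 1, Equiv.swap 0 2,
    Equiv.swap 1 2, Equiv.swap 0 1 * Equiv.swap 1 2, Equiv.swap 1 2 * Equiv.swap 0 1} by
      decide +kernel]
  repeat rw [Finset.sum_insert (by decide +kernel)]
  rw [Finset.sum_singleton]
  ring

/-- For fixed `a, b`, the matrix of `(a, b)` entries of the `B i j`, indexed by `(i, j)`. -/
def coef (B : Fin 3 → Fin 3 → Matrix (Fin 3) (Fin 3) ℂ) (a b : Fin 3) :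
    Matrix (Fin 3) (Fin 3) ℂ := Matrix.of fun i j => B i j a b

open Matrix in
/-- The complete contraction of `u ⊗ v ⊗ w` against the sign character of `S₃`, that is, six times
the mixed discriminant of `u, v, w`. -/
def alt (u v w : Matrix (Fin 3) (Fin 3) ℂ) : ℂ :=
  trace u * trace v * trace w - trace (u * v) * trace w - trace (v * w) * trace u
      - trace (u * w) * trace v + trace (u * v * w) + trace (u * w * v)

/-- The alternating sum of mixed discriminants is symmetric in the two pairs of indices of
`(B i j) a b`, hence expands along `a, b` as a determinant in the matrices `coef B a b`. -/
lemma phi_eq (B : Fin 3 → Fin 3 → Matrix (Fin 3) (Fin 3) ℂ) :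
    6 * ∑ σ : Equiv.Perm (Fin 3),
          ((Equiv.Perm.sign σ : ℤ) : ℂ) * mixedDisc (fun i => B i (σ i)) =
    alt (coef B 0 0) (coef B 1 1) (coef B 2 2) - alt (coef B 0 0) (coef B 1 2) (coef B 2 1)
      - alt (coef B 2 2) (coef B 0 1) (coef B 1 0) - alt (coef B 1 1) (coef B 0 2) (coef B 2 0)
      + alt (coef B 0 1) (coef B 1 2) (coef B 2 0)
      + alt (coef B 0 2) (coef B 1 0) (coef B 2 1) := by
  have e01 : (Equiv.swap 0 1 : Equiv.Perm (Fin 3)) 2 = 2 := by decide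
  have e02 : (Equiv.swap 0 2 : Equiv.Perm (Fin 3)) 1 = 1 := by decide
  have e12 : (Equiv.swap 1 2 : Equiv.Perm (Fin 3)) 0 = 0 := by decide
  simp only [mixedDisc, sum_perm_three, Matrix.det_fin_three, Matrix.of_apply, Equiv.Perm.mul_apply,
    Equiv.Perm.one_apply, Equiv.swap_apply_left, Equiv.swap_apply_right, e01, e02, e12,
    Equiv.Perm.sign_mul, Equiv.Perm.sign_one,
    Equiv.Perm.sign_swap (show (0 : Fin 3) ≠ 1 by decide),
    Equiv.Perm.sign_swap (show (0 : Fin 3) ≠ 2 by decide),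
    Equiv.Perm.sign_swap (show (1 : Fin 3) ≠ 2 by decide)]
  simp only [alt, coef, Matrix.trace, Matrix.diag_apply, Matrix.mul_apply, Fin.sum_univ_three,
    Matrix.of_apply]
  norm_num [Nat.factorial]
  ring

/-! ### Positivity -/

/-- If the matrices `B i j ∈ M₃(ℂ)` satisfy
(i) `∑ i j, ξ i * conj (ξ j) • B i j` is positive definite for every nonzero `ξ ∈ ℂ³`,
(ii) `∑ i, B i i = 3 I`, and (iii) `tr (B i j) = 3 δ_{ij}`, then
`Φ = ∑_{σ ∈ S₃} sgn σ · D(B₁σ(1), B₂σ(2), B₃σ(3))` is a positive (real) number. -/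
theorem stmt0 (B : Fin 3 → Fin 3 → Matrix (Fin 3) (Fin 3) ℂ)
    (hpos : ∀ ξ : Fin 3 → ℂ, ξ ≠ 0 →
      (∑ i : Fin 3, ∑ j : Fin 3, (ξ i * (starRingEnd ℂ) (ξ j)) • B i j).PosDef)
    (hsum : ∑ i : Fin 3, B i i = (3 : ℂ) • (1 : Matrix (Fin 3) (Fin 3) ℂ))
    (htr : ∀ i j : Fin 3, Matrix.trace (B i j) = if i = j then (3 : ℂ) else 0) :
    0 < (∑ σ : Equiv.Perm (Fin 3),
          ((Equiv.Perm.sign σ : ℤ) : ℂ) * mixedDisc (fun i => B i (σ i))).re ∧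
    (∑ σ : Equiv.Perm (Fin 3),
          ((Equiv.Perm.sign σ : ℤ) : ℂ) * mixedDisc (fun i => B i (σ i))).im = 0 := by
  have hΦ := phi_eq B
  generalize (∑ σ : Equiv.Perm (Fin 3),
    ((Equiv.Perm.sign σ : ℤ) : ℂ) * mixedDisc (fun i => B i (σ i))) = Φ at hΦ ⊢
  suffices h : 0 < Φ by
    obtain ⟨h1, h2⟩ := Complex.lt_def.1 h
    exact ⟨h1, h2.symm⟩
  -- The two normalisations: `hsum` fixes the traces of the `coef B a b`, and `htr` says that the
  -- trace of `T(ξ)` is `3 |ξ|²`.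
  have htc : ∀ a b, Matrix.trace (coef B a b) = if a = b then 3 else 0 := by
    intro a b
    have := congrFun (congrFun hsum a) b
    simpa [coef, Matrix.trace, Matrix.sum_apply, Matrix.one_apply] using this
  have hct : coef B 0 0 + coef B 1 1 + coef B 2 2 = (3 : ℂ) • 1 := by
    ext i j
    have := htr i j
    simpa [coef, Matrix.trace, Fin.sum_univ_three, Matrix.one_apply] using this
  let T : Node → Matrix (Fin 3) (Fin 3) ℂ := fun κ =>
    ∑ i : Fin 3, ∑ j : Fin 3, (pt κ i * (starRingEnd ℂ) (pt κ j)) • B i j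
  have hT : ∀ κ a b, T κ a b = form (coef B a b) (pt κ) := by
    intro κ a b
    simp [T, form, coef, Matrix.sum_apply]
  have htrT : ∀ κ, Matrix.trace (T κ) = form ((3 : ℂ) • 1) (pt κ) := by
    intro κ
    rw [← hct]
    simp only [Matrix.trace, Matrix.diag_apply, Fin.sum_univ_three, hT]
    simp only [form, Matrix.add_apply, Fin.sum_univ_three]
    ring
  have hT0 : ∀ κ, (T κ).PosDef := fun κ => hpos _ (pt_ne_zero κ)
  have hS : 0 < ∑ κ, (weight κ : ℂ) * schurFn (T κ) :=
    Finset.sum_pos (fun κ _ => mul_pos (by exact_mod_cast weight_pos κ) (schur_pos (hT0 κ)))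
      Finset.univ_nonempty
  let S := fun u v w : Matrix (Fin 3) (Fin 3) ℂ =>
    ∑ κ : Node, (weight κ : ℂ) * (form u (pt κ) * form v (pt κ) * form w (pt κ))
  have hexp : ∑ κ, (weight κ : ℂ) * schurFn (T κ) =
      S ((3 : ℂ) • 1) ((3 : ℂ) • 1) ((3 : ℂ) • 1)
      - 4 * (S ((3 : ℂ) • 1) (coef B 0 0) (coef B 1 1) + S ((3 : ℂ) • 1) (coef B 0 0) (coef B 2 2)
        + S ((3 : ℂ) • 1) (coef B 1 1) (coef B 2 2) - S ((3 : ℂ) • 1) (coef B 0 1) (coef B 1 0)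
        - S ((3 : ℂ) • 1) (coef B 0 2) (coef B 2 0) - S ((3 : ℂ) • 1) (coef B 1 2) (coef B 2 1))
      + 10 * (S (coef B 0 0) (coef B 1 1) (coef B 2 2) - S (coef B 0 0) (coef B 1 2) (coef B 2 1)
      - S (coef B 2 2) (coef B 0 1) (coef B 1 0) - S (coef B 1 1) (coef B 0 2) (coef B 2 0)
      + S (coef B 0 1) (coef B 1 2) (coef B 2 0)
      + S (coef B 0 2) (coef B 1 0) (coef B 2 1)) := by
    simp only [S, Finset.mul_sum, ← Finset.sum_add_distrib, ← Finset.sum_sub_distrib]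
    refine Finset.sum_congr rfl fun κ _ => ?_
    rw [schurFn, Matrix.det_fin_three, htrT]
    simp only [hT]
    ring
  -- The cubature formula involves symmetric contractions and `Φ` alternating ones; since `htc` fixes
  -- all the traces, they differ by multiples of `e₂` terms, which `schurFn` balances exactly.
  have hval : 960 * Φ = ∑ κ, (weight κ : ℂ) * schurFn (T κ) := by
    rw [hexp]
    simp only [S, cubature]
    simp only [alt] at hΦ
    simp [htc, Matrix.trace_smul] at hΦ ⊢
    rw [Matrix.trace_mul_comm (coef B 1 1) (coef B 0 0), Matrix.trace_mul_comm (coef B 2 2) (coef B 0 0),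
      Matrix.trace_mul_comm (coef B 2 2) (coef B 1 1), Matrix.trace_mul_comm (coef B 1 0) (coef B 0 1),
      Matrix.trace_mul_comm (coef B 2 0) (coef B 0 2), Matrix.trace_mul_comm (coef B 2 1) (coef B 1 2)]
    linear_combination 160 * hΦ
  rw [← hval] at hS
  exact (mul_pos_iff_of_pos_left (by norm_num)).1 hS
end
end

section
/- Let B_{ij} ∈ M₃(ℂ) (1 ≤ i,j ≤ 3) satisfy: (i) Σ_{i,j=1}^{3} ξ^i·conj(ξ^j)·B_{ij} is positive definite for every nonzero ξ ∈ ℂ³; (ii) Σ_{i=1}^{3} B_{ii} = 3·I; (iii) tr(B_{ij}) = 3·δ_{ij}. Then Φ := Σ_{σ∈S₃} sgn(σ)·D(B_{1σ(1)}, B_{2σ(2)}, B_{3σ(3)}) satisfies Φ ≥ ∫_{S⁵} det C(ξ) dμ(ξ), and ∫_{S⁵} det C(ξ) dμ(ξ) > 0. -/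
/-!
Write `E` for the average over the unit sphere of `ℂ³` and `q_A(x) = x* A x`. The mixed
discriminant of three matrices is a spherical average of products of quadratic forms:

`D(A, B, C) = E[10 q_A q_B q_C - 4 (tr A q_B q_C + tr B q_A q_C + tr C q_A q_B) + tr A tr B tr C]`

(`mixedDisc_eq_sphAvg`). Both sides are combinations of the invariants `tr A tr B tr C`,
`tr A tr (BC)`, …, `tr (ABC)`, `tr (ACB)`: the left side by expanding determinants (`mixedDisc3`),
the right side by the moment formula
`E[∏ᵢ conj(x_{p i}) x_{q i}] = (1/60) ∑_σ [p = q ∘ σ]` (`sphAvg_prod`), which gives `avg3`, and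
then `avg2` by taking `C = 1`.

Summing over `σ` with signs, and using `tr B_{ij} = 3 δ_{ij}`, gives
`Φ = E[10 det C - 12 e₂(C) + 27]`, where `e₂` is the sum of the principal `2 × 2` minors. Hence
`Φ - E[det C] = E[9 det C - 12 e₂(C) + 27]`. At each point of the sphere `C(ξ)` is positive
definite by (i) and has trace `3` by (ii), so with eigenvalues `a, b, c` the integrand equals
`(a+b+c)³ - 4 (a+b+c)(ab+bc+ca) + 9 abc`, which is nonnegative by Schur's inequality
(`schur_matrix`). Positivity of `E[det C]` follows from positivity of `det C(ξ)` everywhere.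

The moment formula rests only on the unitary invariance of the measure. Multiplying one coordinate
by `i` kills the monomials with unequal exponents, coordinate permutations identify the others up
to the three types `(3,0,0)`, `(2,1,0)`, `(1,1,1)`, one rotation with entries `3/5`, `4/5` relates
these types, and `‖x‖ = 1` fixes the scale.
-/

open MeasureTheory Metric
open scoped BigOperators ComplexOrder

noncomputable section

/-- `ξ*Uξ = ∑_{p,q} conj(ξ^p) U_{pq} ξ^q`. -/
def quadForm {r : ℕ} (U : Matrix (Fin r) (Fin r) ℂ) (ξ : Fin r → ℂ) : ℂ :=
  ∑ p, ∑ q, (starRingEnd ℂ) (ξ p) * U p q * ξ q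

instance (r : ℕ) : MeasurableSpace (EuclideanSpace ℂ (Fin r)) := borel _
instance (r : ℕ) : BorelSpace (EuclideanSpace ℂ (Fin r)) := ⟨rfl⟩

/-- The normalized rotation-invariant (uniform) probability measure on the unit sphere
`S^{2r-1} = {ξ ∈ ℂ^r : ‖ξ‖ = 1}`. -/
def sphereUniform (r : ℕ) : Measure (sphere (0 : EuclideanSpace ℂ (Fin r)) 1) :=
  ((Measure.addHaar : Measure (EuclideanSpace ℂ (Fin r))).toSphere Set.univ)⁻¹ •
    (Measure.addHaar : Measure (EuclideanSpace ℂ (Fin r))).toSphere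

/-! ### Invariance of the uniform measure under isometries -/

section Invariance

variable {E : Type*} [NormedAddCommGroup E] [NormedSpace ℝ E] [MeasurableSpace E] [BorelSpace E]
  [FiniteDimensional ℝ E]

/-- A linear isometry maps a Haar measure to a multiple of itself, and the multiple is `1` because
the unit ball is preserved. -/
lemma measurePreserving_isometry_addHaar (μ : Measure E) [μ.IsAddHaarMeasure] (L : E ≃ₗᵢ[ℝ] E) :
    MeasurePreserving L μ μ := by
  refine ⟨L.continuous.measurable, ?_⟩
  have h1 : (μ.map L).IsAddHaarMeasure :=
    L.toContinuousLinearEquiv.isAddHaarMeasure_map μ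
  have hc := Measure.isAddLeftInvariant_eq_smul (μ.map L) μ
  set c := Measure.addHaarScalarFactor (μ.map L) μ
  have h3 : (μ.map L) (ball 0 1) = μ (ball 0 1) := by
    rw [Measure.map_apply L.continuous.measurable measurableSet_ball]
    simp
  rw [hc, Measure.smul_apply, ENNReal.smul_def, smul_eq_mul] at h3
  have h4 : c = 1 := by
    have h5 : μ (ball (0 : E) 1) ≠ 0 := (measure_ball_pos μ 0 one_pos).ne'
    have h6 : μ (ball (0 : E) 1) ≠ ⊤ := measure_ball_lt_top.ne
    have h7 := (ENNReal.mul_left_inj h5 h6).1 (h3.trans (one_mul _).symm)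
    exact_mod_cast h7
  rw [hc, h4, one_smul]

/-- The self-map of the unit sphere induced by a linear isometry. -/
def sphereMap (L : E ≃ₗᵢ[ℝ] E) (x : sphere (0 : E) 1) : sphere (0 : E) 1 :=
  ⟨L x, by simp⟩

omit [MeasurableSpace E] [BorelSpace E] [FiniteDimensional ℝ E] in
lemma sphereMap_injective (L : E ≃ₗᵢ[ℝ] E) : Function.Injective (sphereMap L) := by
  intro x y hxy
  have h : L x = L y := congrArg Subtype.val hxy
  exact Subtype.ext (L.injective h)

open scoped Pointwise in
/-- The spherical measure of `s` is a multiple of the volume of the cone `(0, 1) • s`, and taking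
cones commutes with isometries. -/
lemma measurePreserving_sphereMap (μ : Measure E) [μ.IsAddHaarMeasure] (L : E ≃ₗᵢ[ℝ] E) :
    MeasurePreserving (sphereMap L) μ.toSphere μ.toSphere := by
  have hm : Measurable (sphereMap L) :=
    ((L.continuous.comp continuous_subtype_val).subtype_mk _).measurable
  refine ⟨hm, ?_⟩
  ext s hs
  rw [Measure.map_apply hm hs, Measure.toSphere_apply' _ hs, Measure.toSphere_apply' _ (hm hs)]
  congr 1
  have hpre : Set.Ioo (0 : ℝ) 1 • ((↑) '' (sphereMap L ⁻¹' s) : Set E)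
      = L ⁻¹' (Set.Ioo (0 : ℝ) 1 • ((↑) '' s : Set E)) := by
    ext x
    simp only [Set.mem_smul, Set.mem_image, Set.mem_preimage]
    constructor
    · rintro ⟨r, hr, _, ⟨y, hy, rfl⟩, rfl⟩
      exact ⟨r, hr, _, ⟨_, hy, rfl⟩, by simp [sphereMap]⟩
    · rintro ⟨r, hr, _, ⟨y, hy, rfl⟩, h⟩
      refine ⟨r, hr, _, ⟨⟨L.symm y, by simp⟩, ?_, rfl⟩, ?_⟩
      · simpa [sphereMap] using hy
      · apply L.injective
        simpa using h
  rw [hpre]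
  exact (measurePreserving_isometry_addHaar μ L).measure_preimage_emb
    L.toHomeomorph.measurableEmbedding _

end Invariance

/-! ### Averages over the sphere -/

/-- The Hermitian space `ℂ³`. -/
abbrev V3 := EuclideanSpace ℂ (Fin 3)

/-- Integration of a function of the coordinates over the uniform unit sphere of `ℂ³`. -/
def sphAvg (f : (Fin 3 → ℂ) → ℂ) : ℂ :=
  ∫ ξ, f (fun p => (ξ : EuclideanSpace ℂ (Fin 3)) p) ∂(sphereUniform 3)

instance : IsProbabilityMeasure (sphereUniform 3) := by
  constructor
  rw [sphereUniform, Measure.smul_apply, smul_eq_mul]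
  refine ENNReal.inv_mul_cancel ?_ (measure_ne_top _ _)
  rw [Ne, Measure.measure_univ_eq_zero]
  exact Measure.toSphere_ne_zero _

instance : (sphereUniform 3).IsOpenPosMeasure := by
  refine ⟨fun U hU hne => ?_⟩
  rw [sphereUniform, Measure.smul_apply, smul_eq_mul]
  exact mul_ne_zero (ENNReal.inv_ne_zero.2 (measure_ne_top _ _)) (hU.measure_ne_zero _ hne)

lemma integrable_sph {F : Type*} [NormedAddCommGroup F] {f : sphere (0 : V3) 1 → F}
    (hf : Continuous f) : Integrable f (sphereUniform 3) :=
  hf.integrable_of_hasCompactSupport (HasCompactSupport.of_compactSpace f)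

lemma coord_continuous : Continuous
    (fun (ξ : sphere (0 : V3) 1) (p : Fin 3) => (ξ : V3) p) := by
  fun_prop

lemma sphere_sum (ξ : sphere (0 : V3) 1) :
    ∑ p, (starRingEnd ℂ) ((ξ : V3) p) * (ξ : V3) p = 1 := by
  have h : ‖(ξ : V3)‖ ^ 2 = 1 := by simp
  rw [EuclideanSpace.norm_sq_eq] at h
  simp_rw [← Complex.normSq_eq_conj_mul_self, Complex.normSq_eq_norm_sq]
  exact_mod_cast h

/-- A unitary matrix as a real-linear isometry of `ℂ³`. -/
def unitaryIso (U : Matrix (Fin 3) (Fin 3) ℂ) (hU : U.conjTranspose * U = 1) : V3 ≃ₗᵢ[ℝ] V3 :=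
  LinearIsometry.toLinearIsometryEquiv
    { toFun := fun ξ => WithLp.toLp 2 (U.mulVec (WithLp.ofLp ξ))
      map_add' := fun x y => by simp [Matrix.mulVec_add]
      map_smul' := fun r x => by simp [Matrix.mulVec_smul]
      norm_map' := fun x => by
        have key : ∀ y : V3, ((‖y‖ ^ 2 : ℝ) : ℂ) = star (WithLp.ofLp y) ⬝ᵥ (WithLp.ofLp y) := by
          intro y
          rw [EuclideanSpace.norm_sq_eq]
          simp [dotProduct, ← Complex.normSq_eq_conj_mul_self, Complex.normSq_eq_norm_sq]
        have : ‖WithLp.toLp 2 (U.mulVec (WithLp.ofLp x))‖ ^ 2 = ‖x‖ ^ 2 := by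
          have h := key (WithLp.toLp 2 (U.mulVec (WithLp.ofLp x)))
          simp only [Matrix.star_mulVec] at h
          rw [← Matrix.dotProduct_mulVec, Matrix.mulVec_mulVec, hU, Matrix.one_mulVec, ← key] at h
          exact_mod_cast h
        exact (sq_eq_sq₀ (norm_nonneg _) (norm_nonneg _)).1 this } rfl

lemma sphAvg_unitary (U : Matrix (Fin 3) (Fin 3) ℂ) (hU : U.conjTranspose * U = 1)
    (f : (Fin 3 → ℂ) → ℂ) : sphAvg (fun x => f (U.mulVec x)) = sphAvg f := by
  have h := (measurePreserving_sphereMap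
    (Measure.addHaar : Measure (EuclideanSpace ℂ (Fin 3))) (unitaryIso U hU))
  have h' : MeasurePreserving (sphereMap (unitaryIso U hU)) (sphereUniform 3) (sphereUniform 3) :=
    h.smul_measure _
  have hcont : Continuous (sphereMap (unitaryIso U hU)) :=
    ((unitaryIso U hU).continuous.comp continuous_subtype_val).subtype_mk _
  exact h'.integral_comp (hcont.measurableEmbedding (sphereMap_injective _)) (fun ξ => f (fun p => (ξ : V3) p))

lemma sphAvg_congr {f g : (Fin 3 → ℂ) → ℂ}
    (h : ∀ x : Fin 3 → ℂ, ∑ p, (starRingEnd ℂ) (x p) * x p = 1 → f x = g x) :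
    sphAvg f = sphAvg g :=
  integral_congr_ae (Filter.Eventually.of_forall fun ξ => h _ (sphere_sum ξ))

lemma sphAvg_const (c : ℂ) : sphAvg (fun _ => c) = c := by
  simp [sphAvg]

lemma sphAvg_sum {ι : Type*} (s : Finset ι) (c : ι → ℂ) (f : ι → (Fin 3 → ℂ) → ℂ)
    (hf : ∀ i ∈ s, Continuous (f i)) :
    sphAvg (fun x => ∑ i ∈ s, c i * f i x) = ∑ i ∈ s, c i * sphAvg (f i) := by
  unfold sphAvg
  rw [integral_finsetSum]
  · exact Finset.sum_congr rfl fun i _ => integral_const_mul _ _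
  · intro i hi
    exact integrable_sph (continuous_const.mul ((hf i hi).comp coord_continuous))

lemma sphAvg_const_mul (c : ℂ) (f : (Fin 3 → ℂ) → ℂ) :
    sphAvg (fun x => c * f x) = c * sphAvg f := integral_const_mul _ _

/-! ### Moments of degree `(3, 3)` -/

/-- The monomial `∏ₖ conj(xₖ)^{aₖ} xₖ^{bₖ}`. -/
def mono (a b : Fin 3 → ℕ) (x : Fin 3 → ℂ) : ℂ :=
  ∏ k, (starRingEnd ℂ) (x k) ^ a k * x k ^ b k

lemma mono_continuous (a b : Fin 3 → ℕ) : Continuous (mono a b) := by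
  unfold mono
  have := Complex.continuous_conj
  fun_prop

/-- Multiplying one coordinate by `i` preserves the measure and multiplies the monomial by
`i ^ (b k - a k)`, which differs from `1` because `a k ≠ b k` and both are at most three. -/
lemma sphAvg_mono_of_ne (a b : Fin 3 → ℕ) (k : Fin 3) (ha : a k ≤ 3) (hb : b k ≤ 3)
    (hab : a k ≠ b k) : sphAvg (mono a b) = 0 := by
  set d : Fin 3 → ℂ := Function.update 1 k Complex.I with hd
  have hU : (Matrix.diagonal d).conjTranspose * Matrix.diagonal d = 1 := by
    rw [Matrix.diagonal_conjTranspose, Matrix.diagonal_mul_diagonal, ← Matrix.diagonal_one]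
    congr 1
    funext j
    by_cases hj : j = k
    · subst hj; simp [hd]
    · simp [hd, hj]
  have h := sphAvg_unitary _ hU (mono a b)
  have h2 : (fun x => mono a b ((Matrix.diagonal d).mulVec x))
      = fun x => ((-Complex.I) ^ a k * Complex.I ^ b k) * mono a b x := by
    funext x
    simp only [mono, Matrix.mulVec_diagonal]
    have : ∀ j, (starRingEnd ℂ) (d j * x j) ^ a j * (d j * x j) ^ b j
        = (if j = k then ((-Complex.I) ^ a k * Complex.I ^ b k) else 1) *
          ((starRingEnd ℂ) (x j) ^ a j * x j ^ b j) := by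
      intro j
      by_cases hj : j = k
      · subst hj; simp [hd, mul_pow]; ring
      · simp [hd, hj]
    simp_rw [this, Finset.prod_mul_distrib]
    simp
  rw [h2, sphAvg_const_mul] at h
  have h3 : (-Complex.I) ^ a k * Complex.I ^ b k ≠ 1 := by
    -- The exponent difference is nonzero and at most `3` in absolute value, so that power of `i` is not `1`.
    generalize a k = m at *
    generalize b k = n at *
    interval_cases m <;> interval_cases n <;> simp_all [pow_succ, Complex.ext_iff] <;> norm_num
  have h4 : ((-Complex.I) ^ a k * Complex.I ^ b k - 1) * sphAvg (mono a b) = 0 := by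
    linear_combination h
  exact (mul_eq_zero.1 h4).resolve_left (sub_ne_zero.2 h3)

lemma sphAvg_mono_perm (σ : Equiv.Perm (Fin 3)) (a : Fin 3 → ℕ) :
    sphAvg (mono (a ∘ σ) (a ∘ σ)) = sphAvg (mono a a) := by
  have hU : (σ⁻¹.permMatrix ℂ).conjTranspose * σ⁻¹.permMatrix ℂ = 1 := by
    rw [Matrix.conjTranspose_permMatrix, ← Matrix.permMatrix_mul]
    simp
  rw [← sphAvg_unitary _ hU (mono a a)]
  congr 1
  funext x
  simp only [mono, Matrix.permMatrix_mulVec, Function.comp]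
  exact Fintype.prod_equiv σ _ _ (fun i => by simp)

/-- A real rotation with rational entries in the first two coordinates. -/
def rot : Matrix (Fin 3) (Fin 3) ℂ := !![3/5, 4/5, 0; -4/5, 3/5, 0; 0, 0, 1]

lemma rot_unitary : rot.conjTranspose * rot = 1 := by
  ext i j
  fin_cases i <;> fin_cases j <;>
    simp [rot, Matrix.mul_apply, Fin.sum_univ_three, Matrix.conjTranspose_apply,
      map_ofNat] <;> norm_num

/-- Invariance of the average of `|x₀|⁶` under `rot`, after expanding and discarding the monomials
with unequal exponents. -/
lemma rot_rel1 : 15625 * sphAvg (mono ![3,0,0] ![3,0,0]) =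
    729 * sphAvg (mono ![3,0,0] ![3,0,0]) + 11664 * sphAvg (mono ![2,1,0] ![2,1,0])
    + 20736 * sphAvg (mono ![1,2,0] ![1,2,0]) + 4096 * sphAvg (mono ![0,3,0] ![0,3,0]) := by
  have h := sphAvg_unitary _ rot_unitary (mono ![3,0,0] ![3,0,0])
  have h2 : (fun x => mono ![3,0,0] ![3,0,0] (rot.mulVec x)) = fun x =>
      ∑ i ∈ Finset.range 4 ×ˢ Finset.range 4,
        ((Nat.choose 3 i.1 * Nat.choose 3 i.2 : ℕ) * 3 ^ (i.1 + i.2) * 4 ^ (6 - i.1 - i.2) / 15625 : ℂ)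
        * mono ![i.1, 3 - i.1, 0] ![i.2, 3 - i.2, 0] x := by
    funext x
    simp [mono, rot, Matrix.mulVec, dotProduct, Fin.prod_univ_three, Fin.sum_univ_three,
      Finset.sum_product, Finset.sum_range_succ, Nat.choose, map_ofNat]
    ring
  rw [h2, sphAvg_sum _ _ _ (fun i _ => mono_continuous _ _), Finset.sum_product] at h
  simp only [Finset.sum_range_succ, Finset.sum_range_zero] at h
  have hz : ∀ i j : ℕ, i ≤ 3 → j ≤ 3 → i ≠ j →
      sphAvg (mono ![i, 3 - i, 0] ![j, 3 - j, 0]) = 0 := fun i j hi hj hij =>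
    sphAvg_mono_of_ne _ _ 0 (by simpa) (by simpa) (by simpa)
  rw [hz 0 1, hz 0 2, hz 0 3, hz 1 0, hz 1 2, hz 1 3, hz 2 0, hz 2 1, hz 2 3, hz 3 0, hz 3 1, hz 3 2] at h
  all_goals norm_num [Nat.choose] at h ⊢
  linear_combination -15625 * h

/-- Invariance of the average of `|x₀|⁴ |x₂|²` under `rot`. -/
lemma rot_rel2 : 625 * sphAvg (mono ![2,0,1] ![2,0,1]) =
    81 * sphAvg (mono ![2,0,1] ![2,0,1]) + 576 * sphAvg (mono ![1,1,1] ![1,1,1])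
    + 256 * sphAvg (mono ![0,2,1] ![0,2,1]) := by
  have h := sphAvg_unitary _ rot_unitary (mono ![2,0,1] ![2,0,1])
  have h2 : (fun x => mono ![2,0,1] ![2,0,1] (rot.mulVec x)) = fun x =>
      ∑ i ∈ Finset.range 3 ×ˢ Finset.range 3,
        ((Nat.choose 2 i.1 * Nat.choose 2 i.2 : ℕ) * 3 ^ (i.1 + i.2) * 4 ^ (4 - i.1 - i.2) / 625 : ℂ)
        * mono ![i.1, 2 - i.1, 1] ![i.2, 2 - i.2, 1] x := by
    funext x
    simp [mono, rot, Matrix.mulVec, dotProduct, Fin.prod_univ_three, Fin.sum_univ_three,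
      Finset.sum_product, Finset.sum_range_succ, Nat.choose, map_ofNat]
    ring
  rw [h2, sphAvg_sum _ _ _ (fun i _ => mono_continuous _ _), Finset.sum_product] at h
  simp only [Finset.sum_range_succ, Finset.sum_range_zero] at h
  have hz : ∀ i j : ℕ, i ≤ 2 → j ≤ 2 → i ≠ j →
      sphAvg (mono ![i, 2 - i, 1] ![j, 2 - j, 1]) = 0 := fun i j hi hj hij =>
    sphAvg_mono_of_ne _ _ 0 (by simp; omega) (by simp; omega) (by simpa)
  rw [hz 0 1, hz 0 2, hz 1 0, hz 1 2, hz 2 0, hz 2 1] at h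
  all_goals norm_num [Nat.choose] at h ⊢
  linear_combination -625 * h

lemma sum_fun3 {M : Type*} [AddCommMonoid M] (F : (Fin 3 → Fin 3) → M) :
    ∑ q, F q = ∑ i, ∑ j, ∑ k, F ![i, j, k] := by
  rw [← Fintype.sum_bijective (fun t : Fin 3 × Fin 3 × Fin 3 => ![t.1, t.2.1, t.2.2]) (by decide +kernel)
    (fun t => F ![t.1, t.2.1, t.2.2]) F (fun _ => rfl)]
  simp [Fintype.sum_prod_type]

/-- The number of times each index is taken by `p`. -/
def cnt (p : Fin 3 → Fin 3) (k : Fin 3) : ℕ := ∑ i, if p i = k then 1 else 0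

lemma prod_eq_mono (p q : Fin 3 → Fin 3) (x : Fin 3 → ℂ) :
    ∏ i, ((starRingEnd ℂ) (x (p i)) * x (q i)) = mono (cnt p) (cnt q) x := by
  simp only [mono, cnt, Finset.prod_mul_distrib, ← Finset.prod_pow_eq_pow_sum]
  congr 1 <;> rw [Finset.prod_comm] <;> refine Finset.prod_congr rfl fun i _ => ?_ <;>
    simp [pow_ite]

lemma cnt_cases (p : Fin 3 → Fin 3) : ∃ σ : Equiv.Perm (Fin 3),
    cnt p = ![3,0,0] ∘ σ ∨ cnt p = ![2,1,0] ∘ σ ∨ cnt p = ![1,1,1] ∘ σ := by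
  revert p; decide +kernel

/-- The average of `∏ₖ |xₖ|^{2mₖ}` with `∑ mₖ = 3` is proportional to `∏ₖ mₖ!`. -/
lemma sphAvg_cnt (p : Fin 3 → Fin 3) : sphAvg (mono (cnt p) (cnt p)) =
    (∏ k, (cnt p k).factorial : ℕ) * sphAvg (mono ![1,1,1] ![1,1,1]) := by
  have e1 : sphAvg (mono ![0,3,0] ![0,3,0]) = sphAvg (mono ![3,0,0] ![3,0,0]) := by
    rw [← sphAvg_mono_perm (Equiv.swap 0 1) ![3,0,0]]; congr 2 <;> decide
  have e2 : sphAvg (mono ![1,2,0] ![1,2,0]) = sphAvg (mono ![2,1,0] ![2,1,0]) := by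
    rw [← sphAvg_mono_perm (Equiv.swap 0 1) ![2,1,0]]; congr 2 <;> decide
  have e3 : sphAvg (mono ![2,0,1] ![2,0,1]) = sphAvg (mono ![2,1,0] ![2,1,0]) := by
    rw [← sphAvg_mono_perm (Equiv.swap 1 2) ![2,1,0]]; congr 2 <;> decide
  have e4 : sphAvg (mono ![0,2,1] ![0,2,1]) = sphAvg (mono ![2,0,1] ![2,0,1]) := by
    rw [← sphAvg_mono_perm (Equiv.swap 0 1) ![2,0,1]]; congr 2 <;> decide
  have r1 := rot_rel1
  have r2 := rot_rel2
  rw [e1, e2] at r1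
  rw [e4, e3] at r2
  have v2 : sphAvg (mono ![2,1,0] ![2,1,0]) = 2 * sphAvg (mono ![1,1,1] ![1,1,1]) := by
    linear_combination r2 / 288
  have v3 : sphAvg (mono ![3,0,0] ![3,0,0]) = 6 * sphAvg (mono ![1,1,1] ![1,1,1]) := by
    linear_combination r1 / 10800 + 3 * v2
  obtain ⟨σ, h | h | h⟩ := cnt_cases p <;> rw [h, sphAvg_mono_perm] <;>
    simp only [Function.comp]
  · rw [Equiv.prod_comp σ (fun k => ((![3,0,0] : Fin 3 → ℕ) k).factorial), v3]
    simp [Fin.prod_univ_three, Nat.factorial]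
  · rw [Equiv.prod_comp σ (fun k => ((![2,1,0] : Fin 3 → ℕ) k).factorial), v2]
    simp [Fin.prod_univ_three]
  · rw [Equiv.prod_comp σ (fun k => ((![1,1,1] : Fin 3 → ℕ) k).factorial)]
    simp [Fin.prod_univ_three]

/-- The scale of the moments, obtained by expanding `1 = (∑ₖ |xₖ|²)³`. -/
lemma sphAvg_111 : sphAvg (mono ![1,1,1] ![1,1,1]) = 1 / 60 := by
  have h : sphAvg (fun x => ∑ p : Fin 3 → Fin 3, 1 * mono (cnt p) (cnt p) x) = 1 := by
    refine Eq.trans ?_ (sphAvg_const 1)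
    refine sphAvg_congr fun x hx => ?_
    simp only [one_mul, ← prod_eq_mono]
    rw [← Fintype.piFinset_univ, ← Finset.prod_univ_sum (fun _ : Fin 3 => (Finset.univ : Finset (Fin 3)))
      (fun _ p => (starRingEnd ℂ) (x p) * x p)]
    simp [hx]
  rw [sphAvg_sum _ _ _ (fun p _ => mono_continuous _ _)] at h
  simp_rw [sphAvg_cnt, one_mul, ← Finset.sum_mul, ← Nat.cast_sum] at h
  have h60 : ∑ p : Fin 3 → Fin 3, ∏ k, (cnt p k).factorial = 60 := by decide +kernel
  rw [h60] at h
  push_cast at h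
  linear_combination h / 60

lemma cnt_le (p : Fin 3 → Fin 3) (k : Fin 3) : cnt p k ≤ 3 := by
  revert p k; decide +kernel

set_option maxRecDepth 100000 in
/-- If `p` and `q` have the same multiplicities, the permutations carrying `q` to `p` form a coset
of the stabilizer of `p`, of order `∏ₖ mₖ!`; otherwise there are none. -/
lemma cnt_comb : ∀ p q : Fin 3 → Fin 3,
    (if cnt p = cnt q then ∏ k, (cnt p k).factorial else 0) =
      ∑ σ : Equiv.Perm (Fin 3), if p = q ∘ σ then 1 else 0 := by
  decide +kernel

/-- The degree `(3,3)` moments of the uniform measure on the sphere. -/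
lemma sphAvg_prod (p q : Fin 3 → Fin 3) :
    sphAvg (fun x => ∏ i, ((starRingEnd ℂ) (x (p i)) * x (q i))) =
      1 / 60 * ∑ σ : Equiv.Perm (Fin 3), if p = q ∘ σ then 1 else 0 := by
  have h : (∑ σ : Equiv.Perm (Fin 3), if p = q ∘ σ then (1 : ℂ) else 0)
      = ((if cnt p = cnt q then ∏ k, (cnt p k).factorial else 0 : ℕ) : ℂ) := by
    rw [cnt_comb]; push_cast; rfl
  simp_rw [prod_eq_mono]
  rw [h]
  split_ifs with hpq
  · rw [← hpq]
    exact (sphAvg_cnt p).trans (by rw [sphAvg_111]; ring)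
  · obtain ⟨k, hk⟩ := Function.ne_iff.1 hpq
    rw [Nat.cast_zero, mul_zero]
    exact sphAvg_mono_of_ne _ _ k (cnt_le _ _) (cnt_le _ _) hk

/-! ### Trace formulas -/

lemma prod_quadForm (G : Fin 3 → Matrix (Fin 3) (Fin 3) ℂ) (x : Fin 3 → ℂ) :
    ∏ i, quadForm (G i) x = ∑ p : Fin 3 → Fin 3, ∑ q : Fin 3 → Fin 3,
      (∏ i, G i (p i) (q i)) * ∏ i, ((starRingEnd ℂ) (x (p i)) * x (q i)) := by
  simp only [quadForm]
  rw [Finset.prod_univ_sum, Fintype.piFinset_univ]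
  refine Finset.sum_congr rfl fun p _ => ?_
  rw [Finset.prod_univ_sum, Fintype.piFinset_univ]
  refine Finset.sum_congr rfl fun q _ => ?_
  rw [← Finset.prod_mul_distrib]
  exact Finset.prod_congr rfl fun i _ => by ring

lemma sphAvg_prod_quadForm (G : Fin 3 → Matrix (Fin 3) (Fin 3) ℂ) :
    sphAvg (fun x => ∏ i, quadForm (G i) x) =
      1 / 60 * ∑ σ : Equiv.Perm (Fin 3), ∑ q : Fin 3 → Fin 3, ∏ i, G i (q (σ i)) (q i) := by
  simp_rw [prod_quadForm, ← Fintype.sum_prod_type']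
  rw [sphAvg_sum _ _ _ (fun i _ => by simp_rw [prod_eq_mono]; exact mono_continuous _ _)]
  simp_rw [sphAvg_prod]
  rw [Fintype.sum_prod_type_right, Finset.mul_sum]
  simp only [Finset.mul_sum, mul_ite, mul_one, mul_zero]
  rw [Finset.sum_comm]
  simp_rw [Finset.sum_comm (s := Finset.univ (α := Fin 3 → Fin 3)) (t := Finset.univ (α := Equiv.Perm (Fin 3)))]
  rw [Fintype.sum_prod_type]
  refine Finset.sum_congr rfl fun σ _ => ?_
  rw [Finset.sum_comm]
  refine Finset.sum_congr rfl fun q _ => ?_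
  simp [mul_comm]

lemma sum_perm3 {M : Type*} [AddCommMonoid M] (F : Equiv.Perm (Fin 3) → M) :
    ∑ σ, F σ = F 1 + F (Equiv.swap 0 1) + F (Equiv.swap 0 2) + F (Equiv.swap 1 2)
      + F (Equiv.swap 0 1 * Equiv.swap 1 2) + F (Equiv.swap 1 2 * Equiv.swap 0 1) := by
  have h : (Finset.univ : Finset (Equiv.Perm (Fin 3))) = {1, Equiv.swap 0 1, Equiv.swap 0 2,
    Equiv.swap 1 2, Equiv.swap 0 1 * Equiv.swap 1 2, Equiv.swap 1 2 * Equiv.swap 0 1} := by decide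
  rw [h, Finset.sum_insert (by decide), Finset.sum_insert (by decide), Finset.sum_insert (by decide),
    Finset.sum_insert (by decide), Finset.sum_insert (by decide), Finset.sum_singleton]
  simp only [add_assoc]

lemma perm_term (G : Fin 3 → Matrix (Fin 3) (Fin 3) ℂ) (σ : Equiv.Perm (Fin 3)) :
    ∑ q : Fin 3 → Fin 3, ∏ i, G i (q (σ i)) (q i) = ∑ i, ∑ j, ∑ k,
      G 0 (![i, j, k] (σ 0)) i * G 1 (![i, j, k] (σ 1)) j * G 2 (![i, j, k] (σ 2)) k := by
  rw [sum_fun3]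
  simp only [Fin.prod_univ_three]
  rfl

open Matrix in
lemma avg3 (A B C : Matrix (Fin 3) (Fin 3) ℂ) :
    sphAvg (fun x => quadForm A x * quadForm B x * quadForm C x) =
      1 / 60 * (trace A * trace B * trace C + trace A * trace (B * C) + trace B * trace (A * C)
        + trace C * trace (A * B) + trace (A * B * C) + trace (A * C * B)) := by
  have h := sphAvg_prod_quadForm ![A, B, C]
  refine (congrArg sphAvg (funext fun x => ?_)).trans (h.trans ?_)
  · rw [Fin.prod_univ_three]; rfl
  congr 1
  simp_rw [perm_term]
  have e0 : ((![A, B, C] : Fin 3 → Matrix (Fin 3) (Fin 3) ℂ) 0) = A := rfl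
  have e1 : ((![A, B, C] : Fin 3 → Matrix (Fin 3) (Fin 3) ℂ) 1) = B := rfl
  have e2 : ((![A, B, C] : Fin 3 → Matrix (Fin 3) (Fin 3) ℂ) 2) = C := rfl
  simp only [e0, e1, e2]
  rw [sum_perm3]
  have t1 : ∑ i, ∑ j, ∑ k, A i i * B j j * C k k = trace A * trace B * trace C := by
    simp only [trace, diag, Fin.sum_univ_three]; ring
  have t2 : ∑ i, ∑ j, ∑ k, A j i * B i j * C k k = trace C * trace (A * B) := by
    simp only [trace, diag, Fin.sum_univ_three, Matrix.mul_apply]; ring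
  have t3 : ∑ i, ∑ j, ∑ k, A k i * B j j * C i k = trace B * trace (A * C) := by
    simp only [trace, diag, Fin.sum_univ_three, Matrix.mul_apply]; ring
  have t4 : ∑ i, ∑ j, ∑ k, A i i * B k j * C j k = trace A * trace (B * C) := by
    simp only [trace, diag, Fin.sum_univ_three, Matrix.mul_apply]; ring
  have t5 : ∑ i, ∑ j, ∑ k, A j i * B k j * C i k = trace (A * C * B) := by
    simp only [trace, diag, Fin.sum_univ_three, Matrix.mul_apply]; ring
  have t6 : ∑ i, ∑ j, ∑ k, A k i * B i j * C j k = trace (A * B * C) := by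
    simp only [trace, diag, Fin.sum_univ_three, Matrix.mul_apply]; ring
  refine (?_ : _ = (∑ i, ∑ j, ∑ k, A i i * B j j * C k k) + (∑ i, ∑ j, ∑ k, A j i * B i j * C k k)
    + (∑ i, ∑ j, ∑ k, A k i * B j j * C i k) + (∑ i, ∑ j, ∑ k, A i i * B k j * C j k)
    + (∑ i, ∑ j, ∑ k, A j i * B k j * C i k)
    + (∑ i, ∑ j, ∑ k, A k i * B i j * C j k)).trans ?_
  · rfl
  · rw [t1, t2, t3, t4, t5, t6]; ring

open Matrix in
/-- The mixed discriminant of three matrices as a polarization of Newton's identity for `det`. -/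
lemma mixedDisc3 (G : Fin 3 → Matrix (Fin 3) (Fin 3) ℂ) :
    mixedDisc G = 1 / 6 * (trace (G 0) * trace (G 1) * trace (G 2) - trace (G 0) * trace (G 1 * G 2)
      - trace (G 1) * trace (G 0 * G 2) - trace (G 2) * trace (G 0 * G 1)
      + trace (G 0 * G 1 * G 2) + trace (G 0 * G 2 * G 1)) := by
  have hdet : ∀ a b c : Fin 3, ∀ σ : Equiv.Perm (Fin 3), σ 0 = a → σ 1 = b → σ 2 = c →
      Matrix.det (Matrix.of fun i k => G (σ i) i k) =
      G a 0 0 * G b 1 1 * G c 2 2 - G a 0 0 * G b 1 2 * G c 2 1 - G a 0 1 * G b 1 0 * G c 2 2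
      + G a 0 1 * G b 1 2 * G c 2 0 + G a 0 2 * G b 1 0 * G c 2 1 - G a 0 2 * G b 1 1 * G c 2 0 := by
    rintro _ _ _ σ rfl rfl rfl
    rw [Matrix.det_fin_three]
    rfl
  have h6 : (1 / (Nat.factorial 3 : ℂ)) = 1 / 6 := by norm_num [Nat.factorial]
  rw [mixedDisc, h6]
  congr 1
  rw [sum_perm3, hdet 0 1 2 _ (by decide) (by decide) (by decide),
    hdet 1 0 2 _ (by decide) (by decide) (by decide),
    hdet 2 1 0 _ (by decide) (by decide) (by decide),
    hdet 0 2 1 _ (by decide) (by decide) (by decide),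
    hdet 1 2 0 _ (by decide) (by decide) (by decide),
    hdet 2 0 1 _ (by decide) (by decide) (by decide)]
  simp only [trace, diag, Matrix.mul_apply, Fin.sum_univ_three]
  ring

/-! ### Pointwise inequalities -/

open Matrix Polynomial in
/-- Schur's inequality for the eigenvalues of a positive semidefinite matrix of trace `3`. The
parenthesized expression is the sum of the principal `2 × 2` minors. -/
lemma schur_matrix {C : Matrix (Fin 3) (Fin 3) ℂ} (hC : C.PosSemidef) (htr : C.trace = 3) :
    0 ≤ 9 * C.det - 12 * (C 0 0 * C 1 1 - C 0 1 * C 1 0 + C 0 0 * C 2 2 - C 0 2 * C 2 0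
      + C 1 1 * C 2 2 - C 1 2 * C 2 1) + 27 := by
  have hn := hC.eigenvalues_nonneg
  have hdet := hC.1.det_eq_prod_eigenvalues
  have hsum := hC.1.trace_eq_sum_eigenvalues
  -- The second elementary symmetric function of the eigenvalues is read off from the value of the
  -- characteristic polynomial at `1`, given the trace and the determinant.
  have hchar := congrArg (Polynomial.eval 1) hC.1.charpoly_eq
  rw [Matrix.eval_charpoly] at hchar
  simp only [Fin.prod_univ_three, Fin.sum_univ_three, Polynomial.eval_mul, Polynomial.eval_sub,
    Polynomial.eval_X, Polynomial.eval_C] at hdet hsum hchar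
  set a := hC.1.eigenvalues 0
  set b := hC.1.eigenvalues 1
  set c := hC.1.eigenvalues 2
  have ha : 0 ≤ a := hn 0
  have hb : 0 ≤ b := hn 1
  have hc : 0 ≤ c := hn 2
  have hs : a + b + c = 3 := by
    rw [htr] at hsum
    simp only [RCLike.ofReal_eq_complex_ofReal] at hsum
    exact_mod_cast hsum.symm
  have htr' : C 0 0 + C 1 1 + C 2 2 = 3 := by
    rw [← htr]; simp [trace, Fin.sum_univ_three]
  have key : 9 * C.det - 12 * (C 0 0 * C 1 1 - C 0 1 * C 1 0 + C 0 0 * C 2 2 - C 0 2 * C 2 0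
      + C 1 1 * C 2 2 - C 1 2 * C 2 1) + 27
      = ((9 * (a * b * c) - 12 * (a * b + b * c + c * a) + 27 : ℝ) : ℂ) := by
    have hsC : (a : ℂ) + b + c = 3 := by exact_mod_cast hs
    simp only [RCLike.ofReal_eq_complex_ofReal] at hdet hchar
    rw [Matrix.det_fin_three] at hdet hchar
    simp [Matrix.sub_apply] at hchar
    rw [Matrix.det_fin_three]
    push_cast
    linear_combination (-3) * hdet - 12 * hchar - 12 * htr' + 12 * hsC
  rw [key]
  have hreal : 0 ≤ 9 * (a * b * c) - 12 * (a * b + b * c + c * a) + 27 := by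
    -- Schur's inequality of degree one.
    have h0 : 0 ≤ a * (a - b) * (a - c) + b * (b - a) * (b - c) + c * (c - a) * (c - b) := by
      rcases le_total a b with h1 | h1 <;> rcases le_total b c with h2 | h2 <;>
        rcases le_total a c with h3 | h3 <;>
        nlinarith [mul_nonneg ha (sq_nonneg (b - c)), mul_nonneg hb (sq_nonneg (a - c)),
          mul_nonneg hc (sq_nonneg (a - b)), mul_nonneg (sub_nonneg.2 h1) (sub_nonneg.2 h2),
          mul_nonneg (sub_nonneg.2 h1) (sub_nonneg.2 h3),
          mul_nonneg (sub_nonneg.2 h2) (sub_nonneg.2 h3),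
          mul_nonneg ha (mul_nonneg (sub_nonneg.2 h1) (sub_nonneg.2 h3)),
          mul_nonneg hb (mul_nonneg (sub_nonneg.2 h1) (sub_nonneg.2 h2)),
          mul_nonneg hc (mul_nonneg (sub_nonneg.2 h2) (sub_nonneg.2 h3)),
          mul_nonneg (sub_nonneg.2 h1) (mul_nonneg (sub_nonneg.2 h2) (sub_nonneg.2 h3)),
          mul_nonneg (sub_nonneg.2 h1) (sq_nonneg (a - b)),
          mul_nonneg (sub_nonneg.2 h2) (sq_nonneg (b - c)),
          mul_nonneg (sub_nonneg.2 h3) (sq_nonneg (a - c))]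
    have hc' : c = 3 - a - b := by linarith
    rw [hc'] at h0 ⊢
    linarith
  exact_mod_cast hreal

open Matrix in
/-- Over `ℂ`, positivity of the form alone already forces the matrix to be Hermitian. -/
lemma posDef_of_form {C : Matrix (Fin 3) (Fin 3) ℂ}
    (h : ∀ y : Fin 3 → ℂ, y ≠ 0 → 0 < star y ⬝ᵥ (C *ᵥ y)) : C.PosDef := by
  refine PosDef.of_dotProduct_mulVec_pos ?_ h
  rw [← Matrix.isSymmetric_toEuclideanLin_iff, LinearMap.isSymmetric_iff_inner_map_self_real]
  intro v
  rw [Complex.conj_eq_iff_im]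
  by_cases hv : v = 0
  · simp [hv]
  · have hp := h (WithLp.ofLp v) (by simpa using hv)
    have h1 : inner ℂ v (Matrix.toEuclideanLin C v) = star (WithLp.ofLp v) ⬝ᵥ (C *ᵥ WithLp.ofLp v) := by
      rw [EuclideanSpace.inner_eq_star_dotProduct, dotProduct_comm]
      rfl
    rw [← inner_conj_symm, Complex.conj_im, h1, ← (Complex.lt_def.1 hp).2]
    simp

/-! ### The mixed discriminant as a spherical average -/

lemma quadForm_continuous (A : Matrix (Fin 3) (Fin 3) ℂ) : Continuous (quadForm A) := by
  unfold quadForm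
  have := Complex.continuous_conj
  fun_prop

lemma quadForm_one {x : Fin 3 → ℂ} (hx : ∑ p, (starRingEnd ℂ) (x p) * x p = 1) :
    quadForm 1 x = 1 := by
  rw [← hx]
  simp [quadForm, Matrix.one_apply]

lemma sphAvg_sub {f g : (Fin 3 → ℂ) → ℂ} (hf : Continuous f) (hg : Continuous g) :
    sphAvg (fun x => f x - g x) = sphAvg f - sphAvg g :=
  integral_sub (integrable_sph (hf.comp coord_continuous)) (integrable_sph (hg.comp coord_continuous))

/-- The average of a function that is nonnegative in the order of `ℂ`, hence real-valued, is the
average of its real part. -/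
lemma sphAvg_eq_re {f : (Fin 3 → ℂ) → ℂ}
    (h : ∀ x : Fin 3 → ℂ, ∑ p, (starRingEnd ℂ) (x p) * x p = 1 → 0 ≤ f x) :
    sphAvg f = ((∫ ξ : sphere (0 : V3) 1, (f (fun p => (ξ : V3) p)).re ∂(sphereUniform 3) : ℝ) : ℂ) := by
  rw [← integral_complex_ofReal]
  refine integral_congr_ae (Filter.Eventually.of_forall fun ξ => ?_)
  exact Complex.ext rfl (by simpa using (Complex.le_def.1 (h _ (sphere_sum ξ))).2.symm)

lemma sphAvg_nonneg {f : (Fin 3 → ℂ) → ℂ}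
    (h : ∀ x : Fin 3 → ℂ, ∑ p, (starRingEnd ℂ) (x p) * x p = 1 → 0 ≤ f x) : 0 ≤ sphAvg f := by
  rw [sphAvg_eq_re h, Complex.zero_le_real]
  exact integral_nonneg fun ξ => (Complex.le_def.1 (h _ (sphere_sum ξ))).1

lemma sphAvg_pos {f : (Fin 3 → ℂ) → ℂ} (hf : Continuous f)
    (h : ∀ x : Fin 3 → ℂ, ∑ p, (starRingEnd ℂ) (x p) * x p = 1 → 0 < f x) : 0 < sphAvg f := by
  rw [sphAvg_eq_re (fun x hx => (h x hx).le), Complex.zero_lt_real]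
  have hpos : ∀ ξ : sphere (0 : V3) 1, 0 < (f (fun p => (ξ : V3) p)).re :=
    fun ξ => (Complex.lt_def.1 (h _ (sphere_sum ξ))).1
  have hc : Continuous (fun ξ : sphere (0 : V3) 1 => (f (fun p => (ξ : V3) p)).re) :=
    Complex.continuous_re.comp (hf.comp coord_continuous)
  rw [integral_pos_iff_support_of_nonneg (fun ξ => (hpos ξ).le) (integrable_sph hc)]
  have : Function.support (fun ξ : sphere (0 : V3) 1 => (f (fun p => (ξ : V3) p)).re) = Set.univ :=
    Set.eq_univ_of_forall fun ξ => (hpos ξ).ne'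
  rw [this, measure_univ]
  exact one_pos

open Matrix in
lemma avg2 (A B : Matrix (Fin 3) (Fin 3) ℂ) :
    sphAvg (fun x => quadForm A x * quadForm B x) = 1 / 12 * (trace A * trace B + trace (A * B)) := by
  have h := avg3 A B 1
  have h2 : sphAvg (fun x => quadForm A x * quadForm B x) =
      sphAvg (fun x => quadForm A x * quadForm B x * quadForm 1 x) :=
    sphAvg_congr fun x hx => by rw [quadForm_one hx, mul_one]
  rw [h2, h]
  simp
  ring

/-- The integrand whose spherical average is the mixed discriminant of `A, B, C`. -/
def discIntegrand (A B C : Matrix (Fin 3) (Fin 3) ℂ) (x : Fin 3 → ℂ) : ℂ :=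
  10 * (quadForm A x * quadForm B x * quadForm C x)
    + (-4 * A.trace) * (quadForm B x * quadForm C x)
    + (-4 * B.trace) * (quadForm A x * quadForm C x)
    + (-4 * C.trace) * (quadForm A x * quadForm B x)
    + (A.trace * B.trace * C.trace) * 1

lemma discIntegrand_continuous (A B C : Matrix (Fin 3) (Fin 3) ℂ) :
    Continuous (discIntegrand A B C) := by
  unfold discIntegrand
  have := quadForm_continuous A
  have := quadForm_continuous B
  have := quadForm_continuous C
  fun_prop

open Matrix in
/-- The coefficients `10`, `-4`, `1` are those for which the trace expansions `avg3`, `avg2` add up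
to `mixedDisc3`. -/
lemma mixedDisc_eq_sphAvg (G : Fin 3 → Matrix (Fin 3) (Fin 3) ℂ) :
    mixedDisc G = sphAvg (discIntegrand (G 0) (G 1) (G 2)) := by
  rw [mixedDisc3]
  generalize G 0 = A
  generalize G 1 = B
  generalize G 2 = C
  have hA := quadForm_continuous A
  have hB := quadForm_continuous B
  have hC := quadForm_continuous C
  have h := sphAvg_sum Finset.univ
    ![10, -4 * A.trace, -4 * B.trace, -4 * C.trace, A.trace * B.trace * C.trace]
    ![fun x => quadForm A x * quadForm B x * quadForm C x, fun x => quadForm B x * quadForm C x,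
      fun x => quadForm A x * quadForm C x, fun x => quadForm A x * quadForm B x, fun _ => 1]
    (by
      intro i _
      fin_cases i <;> simp <;> fun_prop)
  simp only [Fin.sum_univ_five] at h
  refine Eq.trans ?_ h.symm
  refine (?_ : _ = 10 * sphAvg (fun x => quadForm A x * quadForm B x * quadForm C x)
    + (-4 * A.trace) * sphAvg (fun x => quadForm B x * quadForm C x)
    + (-4 * B.trace) * sphAvg (fun x => quadForm A x * quadForm C x)
    + (-4 * C.trace) * sphAvg (fun x => quadForm A x * quadForm B x)
    + (A.trace * B.trace * C.trace) * sphAvg (fun _ => 1))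
  rw [avg3, avg2, avg2, avg2, sphAvg_const]
  ring

/-! ### The matrix of quadratic forms -/

/-- The matrix `C(x) = (x* B_{ij} x)_{ij}`. -/
def formMatrix (B : Fin 3 → Fin 3 → Matrix (Fin 3) (Fin 3) ℂ) (x : Fin 3 → ℂ) :
    Matrix (Fin 3) (Fin 3) ℂ :=
  Matrix.of fun i j => quadForm (B i j) x

open Matrix in
/-- `y* C(x) y` is the value at `x` of the form of hypothesis (i) with parameter `conj y`. -/
lemma formMatrix_posDef {B : Fin 3 → Fin 3 → Matrix (Fin 3) (Fin 3) ℂ}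
    (hpos : ∀ ξ : Fin 3 → ℂ, ξ ≠ 0 →
      (∑ i : Fin 3, ∑ j : Fin 3, (ξ i * (starRingEnd ℂ) (ξ j)) • B i j).PosDef)
    {x : Fin 3 → ℂ} (hx : x ≠ 0) : (formMatrix B x).PosDef := by
  refine posDef_of_form fun y hy => ?_
  have h := (hpos (star y) (by simpa using hy)).dotProduct_mulVec_pos hx
  refine h.trans_eq ?_
  simp only [formMatrix, quadForm, dotProduct, mulVec, Fin.sum_univ_three, Matrix.of_apply,
    Matrix.add_apply, Matrix.smul_apply, Pi.star_apply, smul_eq_mul, starRingEnd_apply, star_star]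
  ring

lemma formMatrix_trace {B : Fin 3 → Fin 3 → Matrix (Fin 3) (Fin 3) ℂ}
    (hsum : ∑ i : Fin 3, B i i = (3 : ℂ) • (1 : Matrix (Fin 3) (Fin 3) ℂ))
    {x : Fin 3 → ℂ} (hx : ∑ p, (starRingEnd ℂ) (x p) * x p = 1) : (formMatrix B x).trace = 3 := by
  have h : (formMatrix B x).trace = quadForm (∑ i, B i i) x := by
    simp only [formMatrix, Matrix.trace, Matrix.diag, Matrix.of_apply, quadForm,
      Fin.sum_univ_three, Matrix.add_apply]
    ring
  rw [h, hsum]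
  have h2 : quadForm ((3 : ℂ) • (1 : Matrix (Fin 3) (Fin 3) ℂ)) x = 3 * quadForm 1 x := by
    simp only [quadForm, Finset.mul_sum, Matrix.smul_apply, smul_eq_mul]
    exact Finset.sum_congr rfl fun p _ => Finset.sum_congr rfl fun q _ => by ring
  rw [h2, quadForm_one hx, mul_one]

lemma formMatrix_det_continuous (B : Fin 3 → Fin 3 → Matrix (Fin 3) (Fin 3) ℂ) :
    Continuous (fun x => (formMatrix B x).det) := by
  refine Continuous.matrix_det ?_
  exact continuous_matrix fun i j => quadForm_continuous (B i j)

/-- under the normalizations (i)–(iii), the quantity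
`Φ = ∑_{σ ∈ S₃} sgn σ · D(B₁σ(1), B₂σ(2), B₃σ(3))` satisfies
`Φ ≥ ∫_{S⁵} det C(ξ) dμ(ξ) > 0`, where `C(ξ) = (ξ* B_{ij} ξ)_{ij}`. -/
theorem stmt1 (B : Fin 3 → Fin 3 → Matrix (Fin 3) (Fin 3) ℂ)
    (hpos : ∀ ξ : Fin 3 → ℂ, ξ ≠ 0 →
      (∑ i : Fin 3, ∑ j : Fin 3, (ξ i * (starRingEnd ℂ) (ξ j)) • B i j).PosDef)
    (hsum : ∑ i : Fin 3, B i i = (3 : ℂ) • (1 : Matrix (Fin 3) (Fin 3) ℂ))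
    (htr : ∀ i j : Fin 3, Matrix.trace (B i j) = if i = j then (3 : ℂ) else 0)
    (Φ : ℂ)
    (hΦ : Φ = ∑ σ : Equiv.Perm (Fin 3),
          ((Equiv.Perm.sign σ : ℤ) : ℂ) * mixedDisc (fun i => B i (σ i)))
    (I : ℂ)
    (hI : I = ∫ ξ, Matrix.det
        (Matrix.of fun i j : Fin 3 =>
          quadForm (B i j) (fun p => (ξ : EuclideanSpace ℂ (Fin 3)) p))
        ∂(sphereUniform 3)) :
    Φ.im = 0 ∧ I.im = 0 ∧ I.re ≤ Φ.re ∧ 0 < I.re := by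
  have hI' : I = sphAvg (fun x => (formMatrix B x).det) := hI
  have hΦ' : Φ = sphAvg (fun x => ∑ σ : Equiv.Perm (Fin 3), ((Equiv.Perm.sign σ : ℤ) : ℂ) *
      discIntegrand (B 0 (σ 0)) (B 1 (σ 1)) (B 2 (σ 2)) x) := by
    rw [sphAvg_sum _ _ _ (fun σ _ => discIntegrand_continuous _ _ _), hΦ]
    exact Finset.sum_congr rfl fun σ _ => by rw [mixedDisc_eq_sphAvg]
  have hne : ∀ x : Fin 3 → ℂ, ∑ p, (starRingEnd ℂ) (x p) * x p = 1 → x ≠ 0 := by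
    rintro x hx rfl
    simp at hx
  have hIpos : 0 < I := by
    rw [hI']
    exact sphAvg_pos (formMatrix_det_continuous B) fun x hx =>
      (formMatrix_posDef hpos (hne x hx)).det_pos
  have hle : 0 ≤ Φ - I := by
    have hcΦ : Continuous (fun x : Fin 3 → ℂ => ∑ σ : Equiv.Perm (Fin 3),
        ((Equiv.Perm.sign σ : ℤ) : ℂ) * discIntegrand (B 0 (σ 0)) (B 1 (σ 1)) (B 2 (σ 2)) x) :=
      continuous_finsetSum _ fun σ _ =>
        continuous_const.mul (discIntegrand_continuous _ _ _)
    rw [hI', hΦ', ← sphAvg_sub hcΦ (formMatrix_det_continuous B)]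
    -- It suffices to check that the integrand of `Φ - I` is the Schur expression of `C(x)`.
    refine sphAvg_nonneg fun x hx => ?_
    refine (schur_matrix (formMatrix_posDef hpos (hne x hx)).posSemidef
      (formMatrix_trace hsum hx)).trans_eq ?_
    rw [sum_perm3, Matrix.det_fin_three]
    have hs : ∀ (σ : Equiv.Perm (Fin 3)) (a b c : Fin 3), σ 0 = a → σ 1 = b → σ 2 = c →
        ((Equiv.Perm.sign σ : ℤ) : ℂ) * discIntegrand (B 0 (σ 0)) (B 1 (σ 1)) (B 2 (σ 2)) x =
        ((Equiv.Perm.sign σ : ℤ) : ℂ) * discIntegrand (B 0 a) (B 1 b) (B 2 c) x := by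
      rintro σ _ _ _ rfl rfl rfl
      rfl
    rw [hs 1 0 1 2 (by decide) (by decide) (by decide),
      hs _ 1 0 2 (by decide) (by decide) (by decide),
      hs _ 2 1 0 (by decide) (by decide) (by decide),
      hs _ 0 2 1 (by decide) (by decide) (by decide),
      hs _ 1 2 0 (by decide) (by decide) (by decide),
      hs _ 2 0 1 (by decide) (by decide) (by decide)]
    simp only [discIntegrand, htr, formMatrix, Matrix.of_apply, Equiv.Perm.sign_mul]
    rw [Equiv.Perm.sign_swap (by decide), Equiv.Perm.sign_swap (by decide),
      Equiv.Perm.sign_swap (by decide)]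
    simp
    ring
  have h1 := Complex.lt_def.1 hIpos
  have h2 := Complex.le_def.1 hle
  simp only [Complex.zero_re, Complex.zero_im, Complex.sub_re, Complex.sub_im] at h1 h2
  exact ⟨by linarith [h1.2, h2.2], h1.2.symm, by linarith [h2.1], h1.1⟩
end
end

section
/- Let r ≥ 1 and let U, V, W ∈ M_r(ℂ). Then ∫_{S^{2r−1}} (ξ*Uξ)·(ξ*Vξ)·(ξ*Wξ) dμ(ξ) = (tr(U)tr(V)tr(W) + tr(UV)tr(W) + tr(UW)tr(V) + tr(VW)tr(U) + tr(UVW) + tr(UWV)) / (r(r+1)(r+2)). -/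
/-!
Write `q_U(ξ) = ξ*Uξ` and `T(U, V, W) = ∫ q_U q_V q_W dμ`. The measure `μ` is invariant under the
unitary group, because a linear isometry preserves Haar measure and hence the cone measure.
Differentiating `T` along the conjugations by `exp (t A)`, `A` skew-adjoint, gives

  `T([U, A], V, W) + T(U, [V, A], W) + T(U, V, [W, A]) = 0`   (`tripleInt_comm_skew`),

and by complex linearity this holds for every `A` (`tripleInt_comm`). Since `T` is a continuous
trilinear form, only the curves of matrices have to be differentiated, never the integrand.

Apply this identity to `(E_{ij} U, V, W)` with `A = E_{ji}` and sum over `i, j`. On the unit sphere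
the integrands add up (`sum_variations`) to the recursion `moment_recursion`

  `(r + 2) T(U, V, W) = tr U · T(1, V, W) + T(1, VU, W) + T(1, V, WU)`.

Because `q_1 = 1` on the sphere, specializing `V = 1` and then `V = W = 1` gives
`(r + 1) T(1, U, V) = tr U · T(1, 1, V) + T(1, 1, VU)` and `r T(1, 1, U) = tr U`. Unwinding the three
levels produces the six trace terms, one for each permutation of `U, V, W`.
-/

open MeasureTheory Metric
open scoped BigOperators

noncomputable section

/-! ### Invariance of the sphere measure under isometries -/

/-- A linear isometry of a finite-dimensional real normed space preserves every additive Haar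
measure: its determinant has absolute value `1` because it maps the unit ball onto itself. -/
lemma addHaar_preimage_isometry {E : Type*} [NormedAddCommGroup E] [NormedSpace ℝ E]
    [FiniteDimensional ℝ E] [MeasurableSpace E] [BorelSpace E] (μ : Measure E)
    [μ.IsAddHaarMeasure] (f : E ≃ₗᵢ[ℝ] E) (s : Set E) : μ (f ⁻¹' s) = μ s := by
  have key : ∀ s : Set E, μ (f ⁻¹' s) =
      ENNReal.ofReal |LinearMap.det (f.toLinearEquiv.symm : E →ₗ[ℝ] E)| * μ s :=
    fun s => Measure.addHaar_preimage_linearEquiv μ f.toLinearEquiv s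
  have hball := key (ball 0 1)
  rw [f.preimage_ball, map_zero] at hball
  have hpos : μ (ball (0 : E) 1) ≠ 0 := (measure_ball_pos μ 0 one_pos).ne'
  have hfin : μ (ball (0 : E) 1) ≠ ⊤ := measure_ball_lt_top.ne
  have hone : ENNReal.ofReal |LinearMap.det (f.toLinearEquiv.symm : E →ₗ[ℝ] E)| = 1 := by
    have h := hball.symm
    nth_rewrite 2 [← one_mul (μ (ball (0 : E) 1))] at h
    exact (ENNReal.mul_left_inj hpos hfin).1 h
  rw [key s, hone, one_mul]

open scoped Pointwise in
/-- The cone measure on the unit sphere is invariant under linear isometries. -/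
lemma integral_toSphere_comp_isometry {E : Type*} [NormedAddCommGroup E] [NormedSpace ℝ E]
    [FiniteDimensional ℝ E] [MeasurableSpace E] [BorelSpace E] (μ : Measure E)
    [μ.IsAddHaarMeasure] (f : E ≃ₗᵢ[ℝ] E) (F : E → ℂ) :
    ∫ ξ, F (f (ξ : sphere (0 : E) 1)) ∂μ.toSphere =
      ∫ ξ, F (ξ : sphere (0 : E) 1) ∂μ.toSphere := by
  have hmem : ∀ (f : E ≃ₗᵢ[ℝ] E) (ξ : sphere (0 : E) 1), f ξ ∈ sphere (0 : E) 1 := by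
    intro f ξ
    simp
  let g : sphere (0 : E) 1 ≃ₜ sphere (0 : E) 1 :=
    { toFun := fun ξ => ⟨f ξ, hmem f ξ⟩
      invFun := fun ξ => ⟨f.symm ξ, hmem f.symm ξ⟩
      left_inv := fun ξ => by simp
      right_inv := fun ξ => by simp
      continuous_toFun := by fun_prop
      continuous_invFun := by fun_prop }
  have hg : MeasurePreserving g μ.toSphere μ.toSphere := by
    refine ⟨g.continuous.measurable, Measure.ext fun s hs => ?_⟩
    rw [Measure.map_apply g.continuous.measurable hs,
      Measure.toSphere_apply' _ (g.continuous.measurable hs), Measure.toSphere_apply' _ hs]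
    congr 1
    rw [← addHaar_preimage_isometry μ f (Set.Ioo (0 : ℝ) 1 • (Set.image Subtype.val s))]
    congr 1
    ext x
    simp only [Set.mem_smul, Set.mem_image, Set.mem_preimage]
    constructor
    · rintro ⟨t, ht, _, ⟨ξ, hξ, rfl⟩, rfl⟩
      exact ⟨t, ht, _, ⟨g ξ, hξ, rfl⟩, (f.map_smul t (ξ : E)).symm⟩
    · rintro ⟨t, ht, _, ⟨ξ, hξ, rfl⟩, h⟩
      refine ⟨t, ht, _, ⟨g.symm ξ, by simpa using hξ, rfl⟩, ?_⟩
      apply f.injective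
      rw [← h, f.map_smul]
      congr 1
      exact f.apply_symm_apply (ξ : E)
  exact hg.integral_comp g.measurableEmbedding (fun ξ => F ξ)

/-! ### Infinitesimal unitary invariance -/

/-- The integral over the sphere of a product of three quadratic forms `⟪ξ, B ξ⟫`. -/
def tripleInt {H : Type*} [NormedAddCommGroup H] [InnerProductSpace ℂ H]
    [MeasurableSpace H] (ν : Measure (sphere (0 : H) 1)) (B C D : H →L[ℂ] H) : ℂ :=
  ∫ ξ, inner ℂ (ξ : H) (B ξ) * inner ℂ (ξ : H) (C ξ) * inner ℂ (ξ : H) (D ξ) ∂ν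

section Triple

variable {H : Type*} [NormedAddCommGroup H] [InnerProductSpace ℂ H] [MeasurableSpace H]
  (ν : Measure (sphere (0 : H) 1))

lemma tripleInt_smul₁ (c : ℂ) (B C D : H →L[ℂ] H) :
    tripleInt ν (c • B) C D = c * tripleInt ν B C D := by
  unfold tripleInt
  rw [← integral_const_mul]
  congr 1 with ξ
  simp only [smul_apply, inner_smul_right]
  ring

lemma tripleInt_swap₁₂ (B C D : H →L[ℂ] H) : tripleInt ν B C D = tripleInt ν C B D := by
  unfold tripleInt
  congr 1 with ξ
  ring

lemma tripleInt_swap₁₃ (B C D : H →L[ℂ] H) : tripleInt ν B C D = tripleInt ν D C B := by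
  unfold tripleInt
  congr 1 with ξ
  ring

lemma tripleInt_smul₂ (c : ℂ) (B C D : H →L[ℂ] H) :
    tripleInt ν B (c • C) D = c * tripleInt ν B C D := by
  simp only [tripleInt_swap₁₂ ν B, tripleInt_smul₁]

lemma tripleInt_smul₃ (c : ℂ) (B C D : H →L[ℂ] H) :
    tripleInt ν B C (c • D) = c * tripleInt ν B C D := by
  simp only [tripleInt_swap₁₃ ν B, tripleInt_smul₁]

variable [FiniteDimensional ℂ H] [BorelSpace H] [IsFiniteMeasure ν]

lemma tripleInt_integrable (B C D : H →L[ℂ] H) :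
    Integrable (fun ξ : sphere (0 : H) 1 =>
      inner ℂ (ξ : H) (B ξ) * inner ℂ (ξ : H) (C ξ) * inner ℂ (ξ : H) (D ξ)) ν := by
  have : ProperSpace H := FiniteDimensional.proper ℂ H
  exact Continuous.integrable_of_hasCompactSupport (by fun_prop)
    (HasCompactSupport.of_compactSpace _)

lemma tripleInt_add₁ (B B' C D : H →L[ℂ] H) :
    tripleInt ν (B + B') C D = tripleInt ν B C D + tripleInt ν B' C D := by
  unfold tripleInt
  rw [← integral_add (tripleInt_integrable ν _ _ _) (tripleInt_integrable ν _ _ _)]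
  congr 1 with ξ
  simp only [add_apply, inner_add_right]
  ring

lemma tripleInt_add₂ (B C C' D : H →L[ℂ] H) :
    tripleInt ν B (C + C') D = tripleInt ν B C D + tripleInt ν B C' D := by
  simp only [tripleInt_swap₁₂ ν B, tripleInt_add₁]

lemma tripleInt_add₃ (B C D D' : H →L[ℂ] H) :
    tripleInt ν B C (D + D') = tripleInt ν B C D + tripleInt ν B C D' := by
  simp only [tripleInt_swap₁₃ ν B, tripleInt_add₁]

lemma tripleInt_continuous :
    Continuous (fun p : (H →L[ℂ] H) × (H →L[ℂ] H) × (H →L[ℂ] H) =>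
      tripleInt ν p.1 p.2.1 p.2.2) := by
  have : ProperSpace H := FiniteDimensional.proper ℂ H
  have : ProperSpace (H →L[ℂ] H) := FiniteDimensional.proper ℂ _
  have h := continuous_parametric_integral_of_continuous (μ := ν)
    (f := fun (p : (H →L[ℂ] H) × (H →L[ℂ] H) × (H →L[ℂ] H)) (ξ : sphere (0 : H) 1) =>
      inner ℂ (ξ : H) (p.1 ξ) * inner ℂ (ξ : H) (p.2.1 ξ) * inner ℂ (ξ : H) (p.2.2 ξ))
    (by unfold Function.uncurry; fun_prop) isCompact_univ
  simpa [tripleInt] using h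

lemma tripleInt_tendsto {l : Filter ℝ} {X Y Z : ℝ → (H →L[ℂ] H)} {X' Y' Z' : H →L[ℂ] H}
    (hX : Filter.Tendsto X l (nhds X')) (hY : Filter.Tendsto Y l (nhds Y'))
    (hZ : Filter.Tendsto Z l (nhds Z')) :
    Filter.Tendsto (fun t => tripleInt ν (X t) (Y t) (Z t)) l (nhds (tripleInt ν X' Y' Z')) := by
  have h1 := hX.prodMk_nhds (hY.prodMk_nhds hZ)
  have h2 := (tripleInt_continuous ν).tendsto (X', Y', Z')
  have h3 := h2.comp h1
  exact h3

open NormedSpace in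
/-- Infinitesimal unitary invariance: conjugating by the unitaries `exp (t A)`, with `A`
skew-adjoint, leaves the integral unchanged, so its derivative at `t = 0` vanishes. -/
lemma tripleInt_comm_skew
    (hν : ∀ (f : H ≃ₗᵢ[ℂ] H) (F : H → ℂ),
      ∫ ξ, F (f (ξ : sphere (0 : H) 1)) ∂ν = ∫ ξ, F (ξ : sphere (0 : H) 1) ∂ν)
    (A B C D : H →L[ℂ] H) (hA : A ∈ skewAdjoint (H →L[ℂ] H)) :
    tripleInt ν (B * A - A * B) C D + tripleInt ν B (C * A - A * C) D
      + tripleInt ν B C (D * A - A * D) = 0 := by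
  have : CompleteSpace H := FiniteDimensional.complete ℂ H
  let _ : NormedAlgebra ℚ (H →L[ℂ] H) := .restrictScalars ℚ ℂ _
  let cj : (H →L[ℂ] H) → ℝ → (H →L[ℂ] H) :=
    fun X t => exp (t • (-A)) * X * exp (t • A)
  have hderiv : ∀ X, HasDerivAt (cj X) (X * A - A * X) 0 := by
    intro X
    have h1 := hasDerivAt_exp_smul_const (𝕂 := ℝ) A 0
    have h2 := hasDerivAt_exp_smul_const (𝕂 := ℝ) (-A) 0
    have h := (h2.mul_const X).mul h1
    convert! h using 1
    simp
    abel
  have hinv : ∀ t, tripleInt ν (cj B t) (cj C t) (cj D t) = tripleInt ν B C D := by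
    intro t
    have hsk : t • A ∈ skewAdjoint (H →L[ℂ] H) := skewAdjoint.smul_mem t hA
    have hu := exp_mem_unitary_of_mem_skewAdjoint hsk
    let f := Unitary.linearIsometryEquiv ⟨exp (t • A), hu⟩
    have hst : star (exp (t • A)) = exp (t • (-A)) := by
      rw [star_exp, skewAdjoint.mem_iff.mp hsk, smul_neg]
    have hq : ∀ (X : H →L[ℂ] H) (ξ : H),
        inner ℂ ξ (cj X t ξ) = inner ℂ (f ξ) (X (f ξ)) := by
      intro X ξ
      change inner ℂ ξ ((exp (t • (-A))) (X ((exp (t • A)) ξ))) =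
        inner ℂ ((exp (t • A)) ξ) (X ((exp (t • A)) ξ))
      rw [← hst, ContinuousLinearMap.star_eq_adjoint, ContinuousLinearMap.adjoint_inner_right]
    unfold tripleInt
    simp only [hq]
    exact hν f (fun ξ => inner ℂ ξ (B ξ) * inner ℂ ξ (C ξ) * inner ℂ ξ (D ξ))
  have hcj0 : ∀ X, cj X 0 = X := by intro X; simp [cj]
  have hslope : ∀ X, Filter.Tendsto (slope (cj X) 0) (nhdsWithin 0 {0}ᶜ)
      (nhds (X * A - A * X)) := fun X => (hasDerivAt_iff_tendsto_slope.1 (hderiv X))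
  have hcont : ∀ X, Filter.Tendsto (cj X) (nhdsWithin 0 {0}ᶜ) (nhds X) := by
    intro X
    have h := (hderiv X).continuousAt.tendsto
    rw [hcj0] at h
    exact h.mono_left nhdsWithin_le_nhds
  have hlim := ((tripleInt_tendsto ν (hslope B) (hcont C) (hcont D)).add
    (tripleInt_tendsto ν (tendsto_const_nhds (x := B)) (hslope C) (hcont D))).add
    (tripleInt_tendsto ν (tendsto_const_nhds (x := B)) (tendsto_const_nhds (x := C)) (hslope D))
  refine tendsto_nhds_unique hlim ?_
  -- By trilinearity the sum of slopes telescopes to a difference quotient of a constant.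
  refine tendsto_const_nhds.congr fun t => ?_
  have hs : ∀ X, slope (cj X) 0 t = ((t⁻¹ : ℝ) : ℂ) • (cj X t + (-1 : ℂ) • X) := by
    intro X
    rw [slope_def_module, hcj0, sub_zero, neg_one_smul, ← sub_eq_add_neg,
      Complex.coe_smul]
  simp only [hs, tripleInt_smul₁, tripleInt_smul₂, tripleInt_smul₃, tripleInt_add₁,
    tripleInt_add₂, tripleInt_add₃]
  linear_combination (-((t⁻¹ : ℝ) : ℂ)) * hinv t

/-- Infinitesimal invariance for an arbitrary operator `A`, by complexification of the
skew-adjoint case. -/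
lemma tripleInt_comm
    (hν : ∀ (f : H ≃ₗᵢ[ℂ] H) (F : H → ℂ),
      ∫ ξ, F (f (ξ : sphere (0 : H) 1)) ∂ν = ∫ ξ, F (ξ : sphere (0 : H) 1) ∂ν)
    (A B C D : H →L[ℂ] H) :
    tripleInt ν (B * A - A * B) C D + tripleInt ν B (C * A - A * C) D
      + tripleInt ν B C (D * A - A * D) = 0 := by
  have : CompleteSpace H := FiniteDimensional.complete ℂ H
  set S : H →L[ℂ] H := (1 / 2 : ℂ) • (A - star A) with hS
  set S' : H →L[ℂ] H := (-Complex.I / 2 : ℂ) • (A + star A) with hS'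
  have h1 : S ∈ skewAdjoint (H →L[ℂ] H) := by
    rw [skewAdjoint.mem_iff, hS, star_smul, star_sub, star_star, ← smul_neg, neg_sub]
    simp
  have h2 : S' ∈ skewAdjoint (H →L[ℂ] H) := by
    rw [skewAdjoint.mem_iff, hS', star_smul, star_add, star_star, ← neg_smul, add_comm]
    congr 1
    norm_num [Complex.ext_iff]
  have hdec : A = S + Complex.I • S' := by
    have hI : Complex.I * (-Complex.I / 2) = 1 / 2 := by
      linear_combination (-1 / 2 : ℂ) * Complex.I_mul_I
    rw [hS, hS', smul_smul, hI]
    module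
  have hc : ∀ X : H →L[ℂ] H, X * A - A * X =
      (X * S - S * X) + Complex.I • (X * S' - S' * X) := by
    intro X
    nth_rewrite 1 2 [hdec]
    rw [mul_add, add_mul, mul_smul_comm Complex.I X S', smul_mul_assoc Complex.I S' X, smul_sub]
    exact add_sub_add_comm _ _ _ _
  have e1 := tripleInt_comm_skew ν hν S B C D h1
  have e2 := tripleInt_comm_skew ν hν S' B C D h2
  simp only [hc, tripleInt_smul₁, tripleInt_smul₂, tripleInt_smul₃, tripleInt_add₁,
    tripleInt_add₂, tripleInt_add₃]
  linear_combination e1 + Complex.I * e2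

end Triple

/-! ### Passage to matrices -/

lemma quadForm_eq_inner {r : ℕ} (U : Matrix (Fin r) (Fin r) ℂ)
    (ξ : EuclideanSpace ℂ (Fin r)) :
    quadForm U (fun p => ξ p) = inner ℂ ξ (Matrix.toEuclideanCLM (𝕜 := ℂ) U ξ) := by
  rw [PiLp.inner_apply]
  simp only [quadForm, Matrix.ofLp_toEuclideanCLM, Matrix.mulVec, dotProduct,
    RCLike.inner_apply, Finset.sum_mul]
  refine Finset.sum_congr rfl fun p _ => Finset.sum_congr rfl fun q _ => ?_
  ring

instance (r : ℕ) : IsFiniteMeasure (sphereUniform r) := by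
  unfold sphereUniform
  by_cases h : (Measure.addHaar : Measure (EuclideanSpace ℂ (Fin r))).toSphere Set.univ = 0
  · rw [Measure.measure_univ_eq_zero.1 h]
    simp only [smul_zero]
    infer_instance
  · exact Measure.smul_finite _ (ENNReal.inv_ne_top.2 h)

lemma sphereUniform_univ (r : ℕ) (hr : 1 ≤ r) : sphereUniform r Set.univ = 1 := by
  have : Nonempty (Fin r) := ⟨⟨0, hr⟩⟩
  unfold sphereUniform
  rw [Measure.smul_apply, smul_eq_mul]
  refine ENNReal.inv_mul_cancel ?_ (measure_ne_top _ _)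
  rw [Ne, Measure.measure_univ_eq_zero]
  exact Measure.toSphere_ne_zero _

lemma integral_sphereUniform_comp_isometry (r : ℕ)
    (f : EuclideanSpace ℂ (Fin r) ≃ₗᵢ[ℂ] EuclideanSpace ℂ (Fin r))
    (F : EuclideanSpace ℂ (Fin r) → ℂ) :
    ∫ ξ, F (f (ξ : sphere (0 : EuclideanSpace ℂ (Fin r)) 1)) ∂(sphereUniform r) =
      ∫ ξ, F (ξ : sphere (0 : EuclideanSpace ℂ (Fin r)) 1) ∂(sphereUniform r) := by
  let fR : EuclideanSpace ℂ (Fin r) ≃ₗᵢ[ℝ] EuclideanSpace ℂ (Fin r) :=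
    { f.toLinearEquiv.restrictScalars ℝ with norm_map' := f.norm_map }
  unfold sphereUniform
  rw [integral_smul_measure, integral_smul_measure]
  congr 1
  exact integral_toSphere_comp_isometry Measure.addHaar fR F

/-- The integral of three quadratic forms over the sphere, as a function of the matrices. -/
def moment_s8 {r : ℕ} (U V W : Matrix (Fin r) (Fin r) ℂ) : ℂ :=
  ∫ ξ, quadForm U (fun p => (ξ : EuclideanSpace ℂ (Fin r)) p) *
        quadForm V (fun p => (ξ : EuclideanSpace ℂ (Fin r)) p) *
        quadForm W (fun p => (ξ : EuclideanSpace ℂ (Fin r)) p) ∂(sphereUniform r)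

lemma moment_eq_tripleInt {r : ℕ} (U V W : Matrix (Fin r) (Fin r) ℂ) :
    moment_s8 U V W = tripleInt (sphereUniform r) (Matrix.toEuclideanCLM (𝕜 := ℂ) U)
      (Matrix.toEuclideanCLM (𝕜 := ℂ) V) (Matrix.toEuclideanCLM (𝕜 := ℂ) W) := by
  simp only [moment_s8, tripleInt, quadForm_eq_inner]

lemma moment_integrable {r : ℕ} (U V W : Matrix (Fin r) (Fin r) ℂ) :
    Integrable (fun ξ : sphere (0 : EuclideanSpace ℂ (Fin r)) 1 =>
      quadForm U (fun p => (ξ : EuclideanSpace ℂ (Fin r)) p) *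
        quadForm V (fun p => (ξ : EuclideanSpace ℂ (Fin r)) p) *
        quadForm W (fun p => (ξ : EuclideanSpace ℂ (Fin r)) p)) (sphereUniform r) := by
  simp only [quadForm_eq_inner]
  exact tripleInt_integrable _ _ _ _

lemma moment_comm {r : ℕ} (A U V W : Matrix (Fin r) (Fin r) ℂ) :
    moment_s8 (U * A - A * U) V W + moment_s8 U (V * A - A * V) W
      + moment_s8 U V (W * A - A * W) = 0 := by
  simp only [moment_eq_tripleInt, map_sub, map_mul]
  exact tripleInt_comm _ (integral_sphereUniform_comp_isometry r) _ _ _ _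

/-! ### The sum over matrix units -/

section Pointwise

variable {r : ℕ} (U V : Matrix (Fin r) (Fin r) ℂ) (x : Fin r → ℂ) (i j : Fin r)

open Matrix

lemma quadForm_eq_dotProduct : quadForm U x = star x ⬝ᵥ (U *ᵥ x) := by
  simp only [quadForm, dotProduct, mulVec, Finset.mul_sum, mul_assoc, Pi.star_apply,
    starRingEnd_apply]

lemma quadForm_sub : quadForm (U - V) x = quadForm U x - quadForm V x := by
  simp only [quadForm_eq_dotProduct, sub_mulVec, dotProduct_sub]

lemma quadForm_mul : quadForm (U * V) x = (star x ᵥ* U) ⬝ᵥ (V *ᵥ x) := by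
  rw [quadForm_eq_dotProduct, ← mulVec_mulVec, dotProduct_mulVec]

lemma single_one_mulVec (y : Fin r → ℂ) : single i j (1 : ℂ) *ᵥ y = Pi.single i (y j) := by
  ext k
  by_cases h : k = i
  · subst h; simp [mulVec, dotProduct, single_apply]
  · simp [mulVec, dotProduct, h, Ne.symm h]

lemma quadForm_single_mul :
    quadForm (single i j (1 : ℂ) * V) x = star (x i) * (V *ᵥ x) j := by
  rw [quadForm_eq_dotProduct, ← mulVec_mulVec, single_one_mulVec, dotProduct_single]
  rfl

lemma quadForm_mul_single :
    quadForm (V * single i j (1 : ℂ)) x = (star x ᵥ* V) i * x j := by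
  rw [quadForm_mul, single_one_mulVec, dotProduct_single]

lemma single_mul_mul_single_swap :
    single i j (1 : ℂ) * U * single j i (1 : ℂ) = U j j • single i i (1 : ℂ) := by
  rw [single_mul_mul_single, smul_single, one_mul, mul_one, smul_eq_mul, mul_one]

lemma quadForm_smul_single (c : ℂ) :
    quadForm (c • single i i (1 : ℂ)) x = c * (star (x i) * x i) := by
  rw [quadForm_eq_dotProduct, smul_mulVec, single_one_mulVec, dotProduct_smul,
    dotProduct_single, smul_eq_mul]
  rfl

/-- Summing, over all matrix units `A = E_{ji}`, the infinitesimal variations of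
`(ξ*E_{ij}Uξ)(ξ*Vξ)(ξ*Wξ)` at a unit vector. -/
lemma sum_variations (W : Matrix (Fin r) (Fin r) ℂ) (hx : ∑ i, star (x i) * x i = 1) :
    ∑ i, ∑ j,
      (quadForm (single i j (1 : ℂ) * U * single j i 1 - single j i 1 * (single i j 1 * U)) x
          * quadForm V x * quadForm W x
        + quadForm (single i j (1 : ℂ) * U) x
          * quadForm (V * single j i (1 : ℂ) - single j i 1 * V) x * quadForm W x
        + quadForm (single i j (1 : ℂ) * U) x * quadForm V x
          * quadForm (W * single j i (1 : ℂ) - single j i 1 * W) x)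
      = trace U * (quadForm 1 x * quadForm V x * quadForm W x)
        + quadForm 1 x * quadForm (V * U) x * quadForm W x
        + quadForm 1 x * quadForm V x * quadForm (W * U) x
        - (r + 2) * (quadForm U x * quadForm V x * quadForm W x) := by
  have hone : quadForm 1 x = 1 := by
    rw [quadForm_eq_dotProduct, one_mulVec]
    exact hx
  have hU : quadForm U x = ∑ j, star (x j) * (U *ᵥ x) j := quadForm_eq_dotProduct U x
  have h1 : ∑ i, ∑ j, U j j * (star (x i) * x i) = trace U := by
    rw [Finset.sum_comm]
    simp only [← Finset.mul_sum, hx, mul_one]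
    rfl
  have h2 : ∑ i : Fin r, ∑ j, star (x j) * (U *ᵥ x) j = r * quadForm U x := by
    simp [hU]
  have h3 : ∀ V : Matrix (Fin r) (Fin r) ℂ, ∑ i, ∑ j, star (x i) * (U *ᵥ x) j *
      ((star x ᵥ* V) j * x i) = quadForm (V * U) x := by
    intro V
    rw [quadForm_mul, ← one_mul (_ ⬝ᵥ _), ← hx, dotProduct, Finset.sum_mul_sum]
    refine Finset.sum_congr rfl fun i _ => Finset.sum_congr rfl fun j _ => ?_
    ring
  have h4 : ∀ V : Matrix (Fin r) (Fin r) ℂ, ∑ i, ∑ j, star (x i) * (U *ᵥ x) j *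
      (star (x j) * (V *ᵥ x) i) = quadForm U x * quadForm V x := by
    intro V
    rw [hU, quadForm_eq_dotProduct V, dotProduct, Finset.sum_mul_sum, Finset.sum_comm]
    refine Finset.sum_congr rfl fun i _ => Finset.sum_congr rfl fun j _ => ?_
    simp only [Pi.star_apply]
    ring
  have hsq : ∀ i j : Fin r, single j i (1 : ℂ) * (single i j 1 * U) = single j j 1 * U := by
    intro i j
    rw [← mul_assoc, single_mul_single_same, one_mul]
  simp only [quadForm_sub, single_mul_mul_single_swap, quadForm_smul_single, hsq,
    quadForm_single_mul, quadForm_mul_single, hone, one_mul]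
  calc _ = (∑ i, ∑ j, U j j * (star (x i) * x i)) * quadForm V x * quadForm W x
        - (∑ i : Fin r, ∑ j, star (x j) * (U *ᵥ x) j) * quadForm V x * quadForm W x
        + (∑ i, ∑ j, star (x i) * (U *ᵥ x) j * ((star x ᵥ* V) j * x i)) * quadForm W x
        - (∑ i, ∑ j, star (x i) * (U *ᵥ x) j * (star (x j) * (V *ᵥ x) i)) * quadForm W x
        + (∑ i, ∑ j, star (x i) * (U *ᵥ x) j * ((star x ᵥ* W) j * x i)) * quadForm V x
        - (∑ i, ∑ j, star (x i) * (U *ᵥ x) j * (star (x j) * (W *ᵥ x) i)) * quadForm V x := by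
        simp only [Finset.sum_mul, ← Finset.sum_add_distrib, ← Finset.sum_sub_distrib]
        refine Finset.sum_congr rfl fun i _ => Finset.sum_congr rfl fun j _ => ?_
        ring
    _ = _ := by
        rw [h1, h2, h3, h3, h4, h4]
        ring

end Pointwise

/-! ### Recursion for the moments -/

lemma sphere_sum_eq_one {r : ℕ} (ξ : sphere (0 : EuclideanSpace ℂ (Fin r)) 1) :
    ∑ i, star ((ξ : EuclideanSpace ℂ (Fin r)) i) * (ξ : EuclideanSpace ℂ (Fin r)) i = 1 := by
  have h : inner ℂ (ξ : EuclideanSpace ℂ (Fin r)) (ξ : EuclideanSpace ℂ (Fin r)) = (1 : ℂ) := by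
    rw [inner_self_eq_norm_sq_to_K]
    simp
  rw [PiLp.inner_apply] at h
  rw [← h]
  refine Finset.sum_congr rfl fun i _ => ?_
  rw [RCLike.inner_apply, mul_comm]
  rfl

/-- The recursion expressing the third moment through second moments (those with a factor `1`):
integrate `sum_variations`, whose left-hand side has integral zero by invariance. -/
lemma moment_recursion {r : ℕ} (U V W : Matrix (Fin r) (Fin r) ℂ) :
    (r + 2) * moment_s8 U V W = Matrix.trace U * moment_s8 1 V W + moment_s8 1 (V * U) W
      + moment_s8 1 V (W * U) := by
  let S := sphere (0 : EuclideanSpace ℂ (Fin r)) 1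
  let HI : (S → ℂ) → ℂ → Prop := fun f c =>
    Integrable f (sphereUniform r) ∧ ∫ ξ, f ξ ∂(sphereUniform r) = c
  have hi_add : ∀ {f g : S → ℂ} {a b : ℂ}, HI f a → HI g b → HI (fun ξ => f ξ + g ξ) (a + b) :=
    fun hf hg => ⟨hf.1.add hg.1, by rw [integral_add hf.1 hg.1, hf.2, hg.2]⟩
  have hi_sub : ∀ {f g : S → ℂ} {a b : ℂ}, HI f a → HI g b → HI (fun ξ => f ξ - g ξ) (a - b) :=
    fun hf hg => ⟨hf.1.sub hg.1, by rw [integral_sub hf.1 hg.1, hf.2, hg.2]⟩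
  have hi_cmul : ∀ (c : ℂ) {f : S → ℂ} {a : ℂ}, HI f a → HI (fun ξ => c * f ξ) (c * a) :=
    fun c _ _ hf => ⟨hf.1.const_mul c, by rw [integral_const_mul, hf.2]⟩
  have hi_sum : ∀ {f : Fin r → S → ℂ} {a : Fin r → ℂ}, (∀ i, HI (f i) (a i)) →
      HI (fun ξ => ∑ i, f i ξ) (∑ i, a i) := fun hf =>
    ⟨integrable_finsetSum _ fun i _ => (hf i).1, by
      rw [integral_finsetSum _ fun i _ => (hf i).1]
      exact Finset.sum_congr rfl fun i _ => (hf i).2⟩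
  have P := fun A B C : Matrix (Fin r) (Fin r) ℂ =>
    (⟨moment_integrable A B C, rfl⟩ : HI _ (moment_s8 A B C))
  have hL := hi_sum fun i => hi_sum fun j => hi_add (hi_add
    (P (Matrix.single i j (1 : ℂ) * U * Matrix.single j i 1
      - Matrix.single j i 1 * (Matrix.single i j 1 * U)) V W)
    (P (Matrix.single i j (1 : ℂ) * U) (V * Matrix.single j i 1 - Matrix.single j i 1 * V) W))
    (P (Matrix.single i j (1 : ℂ) * U) V (W * Matrix.single j i 1 - Matrix.single j i 1 * W))
  have hR := hi_sub (hi_add (hi_add (hi_cmul (Matrix.trace U) (P 1 V W)) (P 1 (V * U) W))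
    (P 1 V (W * U)))
    (hi_cmul ((r : ℂ) + 2) (P U V W))
  have hzero : ∑ i : Fin r, ∑ j : Fin r,
      (moment_s8 (Matrix.single i j (1 : ℂ) * U * Matrix.single j i 1
          - Matrix.single j i 1 * (Matrix.single i j 1 * U)) V W
        + moment_s8 (Matrix.single i j (1 : ℂ) * U)
            (V * Matrix.single j i 1 - Matrix.single j i 1 * V) W
        + moment_s8 (Matrix.single i j (1 : ℂ) * U) V
            (W * Matrix.single j i 1 - Matrix.single j i 1 * W)) = 0 :=
    Finset.sum_eq_zero fun i _ => Finset.sum_eq_zero fun j _ => moment_comm _ _ _ _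
  have hLR := hL.2.symm.trans ((integral_congr_ae (.of_forall fun ξ =>
    sum_variations U V _ W (sphere_sum_eq_one ξ))).trans hR.2)
  linear_combination hLR - hzero

lemma moment_one_one_one {r : ℕ} (hr : 1 ≤ r) :
    moment_s8 (1 : Matrix (Fin r) (Fin r) ℂ) 1 1 = 1 := by
  have h : ∀ ξ : sphere (0 : EuclideanSpace ℂ (Fin r)) 1,
      quadForm 1 (fun p => (ξ : EuclideanSpace ℂ (Fin r)) p) = 1 := by
    intro ξ
    rw [quadForm_eq_dotProduct, Matrix.one_mulVec]
    exact sphere_sum_eq_one ξ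
  simp [moment_s8, h, Measure.real, sphereUniform_univ r hr]

lemma moment_swap₁₂ {r : ℕ} (U V W : Matrix (Fin r) (Fin r) ℂ) :
    moment_s8 U V W = moment_s8 V U W := by
  simp only [moment_eq_tripleInt]
  exact tripleInt_swap₁₂ _ _ _ _

lemma moment_swap₁₃ {r : ℕ} (U V W : Matrix (Fin r) (Fin r) ℂ) :
    moment_s8 U V W = moment_s8 W V U := by
  simp only [moment_eq_tripleInt]
  exact tripleInt_swap₁₃ _ _ _ _

lemma moment_one_one {r : ℕ} (hr : 1 ≤ r) (U : Matrix (Fin r) (Fin r) ℂ) :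
    r * moment_s8 1 1 U = Matrix.trace U := by
  have h := moment_recursion U 1 1
  rw [one_mul, moment_one_one_one hr, moment_swap₁₃ U, moment_swap₁₂ 1 U 1,
    moment_swap₁₃ U] at h
  linear_combination h

lemma moment_one {r : ℕ} (U V : Matrix (Fin r) (Fin r) ℂ) :
    (r + 1) * moment_s8 1 U V = Matrix.trace U * moment_s8 1 1 V + moment_s8 1 1 (V * U) := by
  have h := moment_recursion U 1 V
  rw [one_mul, moment_swap₁₂ U 1 V] at h
  linear_combination h

/-- for `r ≥ 1` and `U, V, W ∈ M_r(ℂ)`,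
`∫_{S^{2r−1}} (ξ*Uξ)(ξ*Vξ)(ξ*Wξ) dμ(ξ)
  = (tr U tr V tr W + tr(UV) tr W + tr(UW) tr V + tr(VW) tr U + tr(UVW) + tr(UWV))
      / (r(r+1)(r+2))`. -/
theorem stmt8 (r : ℕ) (hr : 1 ≤ r) (U V W : Matrix (Fin r) (Fin r) ℂ) :
    ∫ ξ, quadForm U (fun p => (ξ : EuclideanSpace ℂ (Fin r)) p) *
        quadForm V (fun p => (ξ : EuclideanSpace ℂ (Fin r)) p) *
        quadForm W (fun p => (ξ : EuclideanSpace ℂ (Fin r)) p) ∂(sphereUniform r)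
      = (Matrix.trace U * Matrix.trace V * Matrix.trace W
          + Matrix.trace (U * V) * Matrix.trace W
          + Matrix.trace (U * W) * Matrix.trace V
          + Matrix.trace (V * W) * Matrix.trace U
          + Matrix.trace (U * V * W) + Matrix.trace (U * W * V)) /
          ((r : ℂ) * ((r : ℂ) + 1) * ((r : ℂ) + 2)) := by
  change moment_s8 U V W = _
  have h0 : (r : ℂ) ≠ 0 := by exact_mod_cast (by omega : r ≠ 0)
  have h1 : (r : ℂ) + 1 ≠ 0 := by exact_mod_cast (by omega : r + 1 ≠ 0)
  have h2 : (r : ℂ) + 2 ≠ 0 := by exact_mod_cast (by omega : r + 2 ≠ 0)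
  rw [eq_div_iff (mul_ne_zero (mul_ne_zero h0 h1) h2)]
  have e1 : Matrix.trace (V * U) = Matrix.trace (U * V) := Matrix.trace_mul_comm V U
  have e2 : Matrix.trace (W * U) = Matrix.trace (U * W) := Matrix.trace_mul_comm W U
  have e3 : Matrix.trace (W * V) = Matrix.trace (V * W) := Matrix.trace_mul_comm W V
  have e4 : Matrix.trace (W * (V * U)) = Matrix.trace (U * W * V) := by
    rw [← mul_assoc, Matrix.trace_mul_comm, mul_assoc]
  have e5 : Matrix.trace (W * U * V) = Matrix.trace (U * V * W) := by
    rw [mul_assoc, Matrix.trace_mul_comm]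
  have r3 := moment_recursion U V W
  have p1 := moment_one V W
  have p2 := moment_one (V * U) W
  have p3 := moment_one V (W * U)
  have q1 := moment_one_one hr W
  have q2 := moment_one_one hr (W * V)
  have q3 := moment_one_one hr (W * (V * U))
  have q4 := moment_one_one hr (W * U)
  have q5 := moment_one_one hr (W * U * V)
  rw [e1] at p2
  rw [e2] at q4
  rw [e3] at q2
  rw [e4] at q3
  rw [e5] at q5
  linear_combination (r : ℂ) * (r + 1) * r3 + r * Matrix.trace U * p1 + r * p2 + r * p3
    + (Matrix.trace U * Matrix.trace V + Matrix.trace (U * V)) * q1 + Matrix.trace U * q2 + q3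
    + Matrix.trace V * q4 + q5
end
end

section
/- Let n ≥ 1, r ≥ 1, and let U₁,…,U_n ∈ M_r(ℂ). Then ∫_{S^{2r−1}} ∏_{i=1}^{n} (ξ*U_iξ) dμ(ξ) = (1 / (r(r+1)⋯(r+n−1))) · Σ_{π∈S_n} tr(P_π ∘ (U₁ ⊗ ⋯ ⊗ U_n)), where P_π is the linear operator on (ℂ^r)^{⊗n} determined by P_π(v₁ ⊗ ⋯ ⊗ v_n) = v_{π⁻¹(1)} ⊗ ⋯ ⊗ v_{π⁻¹(n)}, and U₁ ⊗ ⋯ ⊗ U_n acts factorwise on (ℂ^r)^{⊗n}. -/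
/-!
Expanding the quadratic forms in coordinates reduces the identity to the moments
`∫ ∏ᵢ conj(ξ^{f i}) ξ^{g i} dμ` for `f g : Fin n → Fin r`, and the claim becomes that such a moment
is `#{π | f = g ∘ π} / (r (r+1) ⋯ (r+n-1))` (`integral_sphere_monomial`): for fixed `π`, summing
`∏ᵢ Uᵢ (f i) (g i)` over the pairs with `f = g ∘ π` gives the trace of `P_π ∘ (U₁ ⊗ ⋯ ⊗ U_n)`
(`trace_permOp`).

The moments come from a Gaussian. In polar coordinates the integral of a homogeneous polynomial
of degree `2n` against `exp (-‖z‖²)` is its integral over the sphere times `Γ(r + n) / 2`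
(`integral_gaussian_mul_homogeneous`). The Gaussian integral of a monomial factors over the
coordinates, with `∫ conj(z)^a z^b exp (-|z|²) = δ_{ab} π a!` (`integral_complex_gaussian_moment`),
and the resulting product of factorials counts the permutations with `f = g ∘ π` (`count_perm`).
Since `Γ(r + n) = Γ(r) r (r+1) ⋯ (r+n-1)`, comparing with the case `n = 0` finishes the proof.
-/

open MeasureTheory Metric
open scoped BigOperators TensorProduct

noncomputable section

/-- The permutation operator `P_π` on `(ℂ^r)^{⊗ n}`, determined by
`P_π (v₁ ⊗ ⋯ ⊗ v_n) = v_{π⁻¹(1)} ⊗ ⋯ ⊗ v_{π⁻¹(n)}`. -/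
def permOp (r n : ℕ) (π : Equiv.Perm (Fin n)) :
    (⨂[ℂ] _ : Fin n, (Fin r → ℂ)) →ₗ[ℂ] ⨂[ℂ] _ : Fin n, (Fin r → ℂ) :=
  PiTensorProduct.lift
    (MultilinearMap.domDomCongr π⁻¹
      (PiTensorProduct.tprod ℂ (s := fun _ : Fin n => (Fin r → ℂ))))

/-! ### Permutations and traces -/

/-- The number of `π` with `f = g ∘ π` is `∏ p, (#f⁻¹(p))!` when `f` and `g` have fibres of the same
sizes, and `0` otherwise: such `π` form either a coset of the stabilizer of `g` or the empty set. -/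
lemma count_perm {n r : ℕ} (f g : Fin n → Fin r) :
    (Finset.univ.filter fun π : Equiv.Perm (Fin n) => f = g ∘ π).card =
      ∏ p, if (Finset.univ.filter fun i => f i = p).card =
          (Finset.univ.filter fun i => g i = p).card
        then ((Finset.univ.filter fun i => f i = p).card).factorial else 0 := by
  classical
  by_cases h : ∃ π₀ : Equiv.Perm (Fin n), f = g ∘ π₀
  · obtain ⟨π₀, rfl⟩ := h
    have hcard (p : Fin r) : (Finset.univ.filter fun i => (g ∘ π₀) i = p).card =
        (Finset.univ.filter fun i => g i = p).card :=
      Finset.card_bij (fun i _ => π₀ i) (by simp) (by simp)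
        (fun b hb => ⟨π₀.symm b, by simpa using hb, by simp⟩)
    simp only [hcard, if_true]
    have hs := DomMulAct.stabilizer_card g
    simp only [Fintype.card_subtype] at hs
    rw [← hs]
    refine Finset.card_bij (fun π _ => π * π₀⁻¹) ?_ ?_ ?_
    · intro π hπ
      simp only [Finset.mem_filter, Finset.mem_univ, true_and] at hπ ⊢
      ext1 i
      simpa using (congrFun hπ (π₀⁻¹ i)).symm
    · intro π _ π' _ h
      exact mul_right_cancel h
    · intro σ hσ
      simp only [Finset.mem_filter, Finset.mem_univ, true_and] at hσ
      refine ⟨σ * π₀, ?_, by simp⟩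
      simp only [Finset.mem_filter, Finset.mem_univ, true_and]
      ext1 i
      simpa using (congrFun hσ (π₀ i)).symm
  · -- equal fibre sizes would produce some `π`, so the product has a zero factor
    have h0 : (Finset.univ.filter fun π : Equiv.Perm (Fin n) => f = g ∘ π) = ∅ := by
      ext π
      simpa using fun hh => h ⟨π, hh⟩
    rw [h0, Finset.card_empty]
    by_contra hne
    refine h ?_
    have hne' := Finset.prod_ne_zero_iff.1 (Ne.symm hne)
    have hfib (p : Fin r) : Nonempty ({i // f i = p} ≃ {i // g i = p}) := by
      refine ⟨Fintype.equivOfCardEq ?_⟩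
      by_contra hp
      refine hne' p (Finset.mem_univ _) (if_neg ?_)
      simpa [Fintype.card_subtype] using hp
    let e := fun p => (hfib p).some
    refine ⟨(Equiv.sigmaFiberEquiv f).symm.trans
      ((Equiv.sigmaCongrRight e).trans (Equiv.sigmaFiberEquiv g)), ?_⟩
    ext1 i
    exact ((e (f i) ⟨i, rfl⟩).2).symm

/-- The trace in the tensor product of the standard bases. Reindexing the product of the coordinates
by `π` absorbs the inverse in the definition of `permOp`. -/
lemma trace_permOp {n r : ℕ} (π : Equiv.Perm (Fin n)) (U : Fin n → Matrix (Fin r) (Fin r) ℂ) :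
    LinearMap.trace ℂ (⨂[ℂ] _ : Fin n, (Fin r → ℂ))
      (permOp r n π ∘ₗ PiTensorProduct.map (fun i => Matrix.toLin' (U i))) =
    ∑ g : Fin n → Fin r, ∏ i, U i (g (π i)) (g i) := by
  classical
  rw [LinearMap.trace_eq_matrix_trace ℂ
    (Basis.piTensorProduct fun _ : Fin n => Pi.basisFun ℂ (Fin r)), Matrix.trace]
  refine Finset.sum_congr rfl fun g _ => ?_
  rw [Matrix.diag_apply, LinearMap.toMatrix_apply, Basis.piTensorProduct_apply,
    LinearMap.comp_apply, PiTensorProduct.map_tprod, permOp, PiTensorProduct.lift.tprod,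
    MultilinearMap.domDomCongr_apply, Basis.piTensorProduct_repr_tprod_apply,
    ← Equiv.prod_comp π]
  simp

/-! ### Gaussian integrals -/

/-- Integration in polar coordinates: for `h` homogeneous of degree `k`, the Gaussian integral of `h`
is its integral over the sphere times the radial integral `∫₀^∞ t^(dim E - 1 + k) exp (-t²) dt`. -/
lemma integral_gaussian_mul_homogeneous {E : Type*} [NormedAddCommGroup E] [NormedSpace ℝ E]
    [MeasurableSpace E] [BorelSpace E] [FiniteDimensional ℝ E] [Nontrivial E]
    (μ : Measure E) [μ.IsAddHaarMeasure] (h : E → ℂ) (k : ℕ)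
    (hh : ∀ (t : ℝ) (x : E), 0 < t → h (t • x) = (t : ℂ) ^ k * h x) :
    ∫ x, h x * (Real.exp (-‖x‖ ^ 2) : ℂ) ∂μ =
      (∫ ξ, h (ξ : E) ∂μ.toSphere) *
        ((1 / 2 * Real.Gamma ((Module.finrank ℝ E + k) / 2) : ℝ) : ℂ) := by
  have hd : 0 < Module.finrank ℝ E := Module.finrank_pos
  calc
    _ = ∫ x : ({(0)}ᶜ : Set E), h x.1 * (Real.exp (-‖x.1‖ ^ 2) : ℂ) ∂(μ.comap (↑)) := by
      rw [integral_subtype_comap (measurableSet_singleton _).compl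
        fun x ↦ h x * (Real.exp (-‖x‖ ^ 2) : ℂ), restrict_compl_singleton]
    _ = ∫ x : sphere (0 : E) 1 × Set.Ioi (0 : ℝ),
        h x.1 * (((x.2 : ℝ) ^ k * Real.exp (-(x.2 : ℝ) ^ 2) : ℝ) : ℂ)
          ∂μ.toSphere.prod (.volumeIoiPow (Module.finrank ℝ E - 1)) := by
      rw [← μ.measurePreserving_homeomorphUnitSphereProd.integral_comp
        (Homeomorph.measurableEmbedding _)]
      refine integral_congr_ae (.of_forall fun x => ?_)
      have hx : 0 < ‖x.1‖ := norm_pos_iff.2 x.2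
      have hx' : h x.1 = (‖x.1‖ : ℂ) ^ k * h (‖x.1‖⁻¹ • x.1) := by
        rw [← hh _ _ hx, smul_inv_smul₀ hx.ne']
      simp only [homeomorphUnitSphereProd_apply_snd_coe, homeomorphUnitSphereProd_apply_fst_coe]
      rw [hx']
      push_cast
      ring
    _ = (∫ ξ, h (ξ : E) ∂μ.toSphere) *
        ∫ t : Set.Ioi (0 : ℝ), (((t : ℝ) ^ k * Real.exp (-(t : ℝ) ^ 2) : ℝ) : ℂ)
          ∂(.volumeIoiPow (Module.finrank ℝ E - 1)) :=
      integral_prod_mul (L := ℂ) (fun ξ : sphere (0 : E) 1 => h ξ)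
        (fun t : Set.Ioi (0 : ℝ) => (((t : ℝ) ^ k * Real.exp (-(t : ℝ) ^ 2) : ℝ) : ℂ))
    _ = _ := by
      congr 1
      rw [integral_complex_ofReal]
      congr 1
      simp only [Measure.volumeIoiPow, ENNReal.ofReal]
      rw [integral_withDensity_eq_integral_smul
          (measurable_subtype_coe.pow_const _).real_toNNReal,
        integral_subtype_comap measurableSet_Ioi
          fun a : ℝ ↦ Real.toNNReal (a ^ (Module.finrank ℝ E - 1)) • (a ^ k * Real.exp (-a ^ 2))]
      have := integral_rpow_mul_exp_neg_rpow (p := 2) (q := (Module.finrank ℝ E - 1 + k : ℕ))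
        two_pos (by linarith [Nat.cast_nonneg (α := ℝ) (Module.finrank ℝ E - 1 + k)])
      rw [show (Module.finrank ℝ E + k : ℝ) = (Module.finrank ℝ E - 1 + k : ℕ) + 1 by
        push_cast [Nat.cast_sub hd]; ring, ← this]
      refine setIntegral_congr_fun measurableSet_Ioi fun x hx ↦ ?_
      simp only [NNReal.smul_def]
      rw [Real.coe_toNNReal _ (pow_nonneg (le_of_lt hx) _), Real.rpow_natCast, pow_add,
        Real.rpow_two, smul_eq_mul, mul_assoc]

lemma integral_complex_gaussian_moment (a b : ℕ) :
    ∫ z : ℂ, (starRingEnd ℂ z ^ a * z ^ b) * (Real.exp (-‖z‖ ^ 2) : ℂ) =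
      (Real.pi : ℂ) * (if a = b then a.factorial else 0 : ℕ) := by
  split_ifs with hab
  · subst hab
    have h := Complex.integral_rpow_mul_exp_neg_rpow (p := 2) (q := (2 * a : ℕ)) one_le_two
      (by linarith [Nat.cast_nonneg (α := ℝ) (2 * a)])
    rw [show (((2 * a : ℕ) : ℝ) + 2) / 2 = a + 1 by push_cast; ring,
      Real.Gamma_nat_eq_factorial] at h
    have h2 := congrArg (fun x : ℝ => (x : ℂ)) h
    simp only [← integral_complex_ofReal] at h2
    rw [show (Real.pi : ℂ) * (a.factorial : ℕ) =
      ((2 * Real.pi / 2 * a.factorial : ℝ) : ℂ) by push_cast; ring, ← h2]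
    refine integral_congr_ae (.of_forall fun z => ?_)
    simp only [Real.rpow_natCast, Real.rpow_two]
    rw [← mul_pow, Complex.conj_mul']
    push_cast
    ring
  · -- rotating by the angle `π / (b - a)` flips the sign of the integrand
    have hab' : (b : ℂ) - a ≠ 0 := sub_ne_zero.2 fun h => hab (by exact_mod_cast h.symm)
    set c : Circle := Circle.exp (Real.pi / (b - a))
    have hc : starRingEnd ℂ (c : ℂ) ^ a * (c : ℂ) ^ b = -1 := by
      simp only [c, Circle.coe_exp]
      rw [← Complex.exp_conj, ← Complex.exp_nat_mul, ← Complex.exp_nat_mul, ← Complex.exp_add,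
        ← Complex.exp_pi_mul_I]
      congr 1
      simp only [map_mul, Complex.conj_ofReal, Complex.conj_I]
      push_cast
      field_simp
      ring
    have h := (rotation c).measurePreserving.integral_comp
      (rotation c).toHomeomorph.measurableEmbedding
      (fun z : ℂ => (starRingEnd ℂ z ^ a * z ^ b) * (Real.exp (-‖z‖ ^ 2) : ℂ))
    have h2 : ∀ z : ℂ, (starRingEnd ℂ (rotation c z) ^ a * (rotation c z) ^ b) *
        (Real.exp (-‖rotation c z‖ ^ 2) : ℂ) =
        -((starRingEnd ℂ z ^ a * z ^ b) * (Real.exp (-‖z‖ ^ 2) : ℂ)) := by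
      intro z
      rw [LinearIsometryEquiv.norm_map, rotation_apply, map_mul, mul_pow, mul_pow]
      linear_combination (starRingEnd ℂ z ^ a * z ^ b * (Real.exp (-‖z‖ ^ 2) : ℂ)) * hc
    simp only [h2] at h
    rw [integral_neg] at h
    rw [Nat.cast_zero, mul_zero]
    linear_combination (-1 / 2 : ℂ) * h

/-- The chosen Haar measure on `EuclideanSpace ℂ (Fin r)` is a nonzero multiple of the product
Lebesgue measure on `Fin r → ℂ`. -/
lemma exists_integral_addHaar_eq (r : ℕ) : ∃ c : ℂ, c ≠ 0 ∧
    ∀ F : EuclideanSpace ℂ (Fin r) → ℂ,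
      ∫ x, F x ∂(Measure.addHaar : Measure (EuclideanSpace ℂ (Fin r))) =
        c * ∫ x : Fin r → ℂ, F (WithLp.toLp 2 x) := by
  let e : (Fin r → ℂ) ≃L[ℝ] EuclideanSpace ℂ (Fin r) :=
    (PiLp.continuousLinearEquiv 2 ℝ (fun _ : Fin r => ℂ)).symm
  have hν : (Measure.map e (volume : Measure (Fin r → ℂ))).IsAddHaarMeasure :=
    e.isAddHaarMeasure_map _
  have hμ := Measure.isAddLeftInvariant_eq_smul
    (Measure.addHaar : Measure (EuclideanSpace ℂ (Fin r)))
    (Measure.map e (volume : Measure (Fin r → ℂ)))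
  have hpos := Measure.addHaarScalarFactor_pos_of_isAddHaarMeasure
    (Measure.addHaar : Measure (EuclideanSpace ℂ (Fin r)))
    (Measure.map e (volume : Measure (Fin r → ℂ)))
  set c := Measure.addHaarScalarFactor
    (Measure.addHaar : Measure (EuclideanSpace ℂ (Fin r)))
    (Measure.map e (volume : Measure (Fin r → ℂ)))
  refine ⟨((c : ℝ) : ℂ), by exact_mod_cast hpos.ne', fun F => ?_⟩
  have he : MeasurableEmbedding e := e.toHomeomorph.measurableEmbedding
  rw [hμ, integral_smul_nnreal_measure, he.integral_map, NNReal.smul_def, Complex.real_smul]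
  rfl

lemma Gamma_add_nat_eq_prod (r n : ℕ) (hr : 1 ≤ r) :
    Real.Gamma (r + n) = Real.Gamma r * ∏ k : Fin n, ((r : ℝ) + (k : ℕ)) := by
  induction n with
  | zero => simp
  | succ n ih =>
    have : (r : ℝ) + n ≠ 0 := by positivity
    rw [Fin.prod_univ_castSucc, Nat.cast_succ, ← add_assoc, Real.Gamma_add_one this, ih]
    simp only [Fin.val_castSucc, Fin.val_last]
    ring

/-- The unnormalized Wick formula for monomials: by Fubini the integral is a product of
one-dimensional moments, which `count_perm` turns into a number of permutations. -/
lemma integral_gaussian_monomial {n r : ℕ} (f g : Fin n → Fin r) :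
    ∫ x : Fin r → ℂ, (∏ i, starRingEnd ℂ (x (f i)) * x (g i)) *
        (Real.exp (-‖(WithLp.toLp 2 x : EuclideanSpace ℂ (Fin r))‖ ^ 2) : ℂ) =
      (Real.pi : ℂ) ^ r *
        (Finset.univ.filter fun π : Equiv.Perm (Fin n) => f = g ∘ π).card := by
  rw [count_perm]
  have h (x : Fin r → ℂ) : (∏ i, starRingEnd ℂ (x (f i)) * x (g i)) *
        (Real.exp (-‖(WithLp.toLp 2 x : EuclideanSpace ℂ (Fin r))‖ ^ 2) : ℂ) =
      ∏ p, (starRingEnd ℂ (x p) ^ (Finset.univ.filter fun i => f i = p).card *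
        x p ^ (Finset.univ.filter fun i => g i = p).card) *
        (Real.exp (-‖x p‖ ^ 2) : ℂ) := by
    rw [EuclideanSpace.norm_sq_eq, ← Finset.sum_neg_distrib, Real.exp_sum, Complex.ofReal_prod,
      Finset.prod_mul_distrib, Finset.prod_mul_distrib, Finset.prod_mul_distrib,
      ← Finset.prod_fiberwise' Finset.univ f fun p => starRingEnd ℂ (x p),
      ← Finset.prod_fiberwise' Finset.univ g fun p => x p]
    simp only [Finset.prod_const]
  simp only [h]
  rw [integral_fintype_prod_volume_eq_prod (fun p (z : ℂ) =>
    (starRingEnd ℂ z ^ (Finset.univ.filter fun i => f i = p).card *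
        z ^ (Finset.univ.filter fun i => g i = p).card) * (Real.exp (-‖z‖ ^ 2) : ℂ))]
  simp only [integral_complex_gaussian_moment, Finset.prod_mul_distrib, Finset.prod_const,
    Finset.card_univ, Fintype.card_fin, Nat.cast_prod]

/-! ### Moments on the sphere -/

/-- Moments of the uniform measure on the sphere. The unknown normalizations of the Haar measure
and of the sphere are eliminated by comparison with the empty monomial. -/
lemma integral_sphere_monomial {n r : ℕ} (hr : 1 ≤ r) (f g : Fin n → Fin r) :
    ∫ ξ, ∏ i, starRingEnd ℂ ((ξ : EuclideanSpace ℂ (Fin r)) (f i)) *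
        (ξ : EuclideanSpace ℂ (Fin r)) (g i) ∂(sphereUniform r) =
      (1 / ∏ k : Fin n, ((r : ℂ) + (k : ℕ))) *
        (Finset.univ.filter fun π : Equiv.Perm (Fin n) => f = g ∘ π).card := by
  have : NeZero r := ⟨by omega⟩
  set σ := (Measure.addHaar : Measure (EuclideanSpace ℂ (Fin r))).toSphere with hσ
  obtain ⟨c, hc, hF⟩ := exists_integral_addHaar_eq r
  have key (m : ℕ) (f g : Fin m → Fin r) :
      (∫ ξ, ∏ i, starRingEnd ℂ ((ξ : EuclideanSpace ℂ (Fin r)) (f i)) *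
        (ξ : EuclideanSpace ℂ (Fin r)) (g i) ∂σ) * ((1 / 2 * Real.Gamma (r + m) : ℝ) : ℂ) =
      c * ((Real.pi : ℂ) ^ r *
        (Finset.univ.filter fun π : Equiv.Perm (Fin m) => f = g ∘ π).card) := by
    have h := integral_gaussian_mul_homogeneous
      (Measure.addHaar : Measure (EuclideanSpace ℂ (Fin r)))
      (fun x => ∏ i, starRingEnd ℂ (x (f i)) * x (g i)) (2 * m) (by
        intro t x _
        simp only [PiLp.smul_apply, Complex.real_smul, map_mul, Complex.conj_ofReal]
        simp only [Finset.prod_mul_distrib, Finset.prod_const, Finset.card_univ, Fintype.card_fin]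
        ring)
    rw [hF, integral_gaussian_monomial, finrank_real_of_complex, finrank_euclideanSpace_fin] at h
    rw [h, hσ]
    congr 4
    push_cast
    ring
  -- the empty monomial gives the total mass of the sphere
  have h0 := key 0 Fin.elim0 Fin.elim0
  have h1 := key n f g
  have hΓ : Real.Gamma r ≠ 0 := (Real.Gamma_pos_of_pos (by exact_mod_cast hr)).ne'
  have hΓ' : (Real.Gamma r : ℂ) ≠ 0 := by exact_mod_cast hΓ
  have hP : (∏ k : Fin n, ((r : ℂ) + (k : ℕ))) ≠ 0 :=
    Finset.prod_ne_zero_iff.2 fun k _ => by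
      have : r + (k : ℕ) ≠ 0 := by omega
      exact_mod_cast this
  have hπ : (Real.pi : ℂ) ^ r ≠ 0 := pow_ne_zero _ (by exact_mod_cast Real.pi_ne_zero)
  rw [Gamma_add_nat_eq_prod r n hr] at h1
  simp only [Finset.univ_eq_empty, Finset.prod_empty, integral_const, Complex.real_smul, mul_one,
    Nat.cast_zero, add_zero, Finset.filter_true_of_mem (fun π _ => Subsingleton.elim _ _),
    Finset.card_univ, Fintype.card_perm, Fintype.card_fin, Nat.factorial_zero, Nat.cast_one] at h0
  push_cast at h0 h1
  have hσ0 : ((σ.real Set.univ : ℝ) : ℂ) ≠ 0 := by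
    intro h
    rw [h, zero_mul] at h0
    exact mul_ne_zero hc hπ h0.symm
  rw [sphereUniform, integral_smul_measure, ENNReal.toReal_inv, ← hσ, Complex.real_smul]
  change (((σ.real Set.univ)⁻¹ : ℝ) : ℂ) * _ = _
  rw [Complex.ofReal_inv, inv_mul_eq_iff_eq_mul₀ hσ0, one_div, ← mul_assoc, mul_comm _ (_⁻¹),
    mul_assoc, eq_inv_mul_iff_mul_eq₀ hP]
  apply mul_right_cancel₀ (b := 1 / 2 * (Real.Gamma r : ℂ)) (by simpa using hΓ')
  linear_combination h1 - ((Finset.univ.filter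
    fun π : Equiv.Perm (Fin n) => f = g ∘ π).card : ℂ) * h0

/-- for `n, r ≥ 1` and `U₁, …, U_n ∈ M_r(ℂ)`,
`∫_{S^{2r−1}} ∏ᵢ (ξ*Uᵢξ) dμ(ξ)
  = (1/(r(r+1)⋯(r+n−1))) ∑_{π ∈ S_n} tr (P_π ∘ (U₁ ⊗ ⋯ ⊗ U_n))`,
where `U₁ ⊗ ⋯ ⊗ U_n` acts factorwise on `(ℂ^r)^{⊗ n}`. -/
theorem stmt9 (n r : ℕ) (hn : 1 ≤ n) (hr : 1 ≤ r)
    (U : Fin n → Matrix (Fin r) (Fin r) ℂ) :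
    ∫ ξ, ∏ i : Fin n,
        quadForm (U i) (fun p => (ξ : EuclideanSpace ℂ (Fin r)) p) ∂(sphereUniform r)
      = (1 / ∏ k : Fin n, ((r : ℂ) + (k : ℕ))) *
          ∑ π : Equiv.Perm (Fin n),
            LinearMap.trace ℂ (⨂[ℂ] _ : Fin n, (Fin r → ℂ))
              (permOp r n π ∘ₗ
                PiTensorProduct.map (fun i => Matrix.toLin' (U i))) := by
  have : NeZero r := ⟨by omega⟩
  have hfin : IsFiniteMeasure (sphereUniform r) := by
    refine ⟨?_⟩
    rw [sphereUniform, Measure.smul_apply, smul_eq_mul]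
    exact (ENNReal.inv_mul_le_one _).trans_lt ENNReal.one_lt_top
  have hexp (ξ : Fin r → ℂ) : ∏ i, quadForm (U i) ξ =
      ∑ f : Fin n → Fin r, ∑ g : Fin n → Fin r, (∏ i, U i (f i) (g i)) *
        ∏ i, starRingEnd ℂ (ξ (f i)) * ξ (g i) := by
    simp only [quadForm, Finset.prod_univ_sum, Fintype.piFinset_univ, ← Finset.prod_mul_distrib]
    refine Finset.sum_congr rfl fun f _ => Finset.sum_congr rfl fun g _ =>
      Finset.prod_congr rfl fun i _ => by ring
  have hint (f g : Fin n → Fin r) : Integrable (fun ξ : sphere (0 : EuclideanSpace ℂ (Fin r)) 1 =>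
      (∏ i, U i (f i) (g i)) * ∏ i, starRingEnd ℂ ((ξ : EuclideanSpace ℂ (Fin r)) (f i)) *
        (ξ : EuclideanSpace ℂ (Fin r)) (g i)) (sphereUniform r) := by
    refine Continuous.integrable_of_hasCompactSupport ?_ (HasCompactSupport.of_compactSpace _)
    simp only [starRingEnd_apply]
    fun_prop
  simp only [hexp]
  rw [integral_finsetSum _ fun f _ => integrable_finsetSum _ fun g _ => hint f g]
  simp only [integral_finsetSum _ fun g _ => hint _ g, integral_const_mul,
    integral_sphere_monomial hr, trace_permOp]
  have hcard (f g : Fin n → Fin r) :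
      ((Finset.univ.filter fun π : Equiv.Perm (Fin n) => f = g ∘ π).card : ℂ) =
        ∑ π : Equiv.Perm (Fin n), if f = g ∘ π then 1 else 0 := by
    simp
  simp only [hcard, Finset.mul_sum, mul_ite, mul_one, mul_zero]
  -- for fixed `π` and `g`, only `f = g ∘ π` contributes
  rw [Finset.sum_comm]
  simp_rw [Finset.sum_comm (s := (Finset.univ : Finset (Fin n → Fin r)))
    (t := (Finset.univ : Finset (Equiv.Perm (Fin n))))]
  simp [mul_comm]
end
end
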